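/- arXiv:0911.1093 — 6 statements merged into one kernel-verified Lean document; each statement's English description precedes it below -/
import Mathlib

section
/- Let p ≥ 5 be a prime, q = 2(p−1), and let s₁ be an integer with 0 < s₁ < p. Let t ≥ 0 be an integer with digits c_{-1}(t), c_0(t), c_1(t), …. If c_j(t) > s₁ for some j ≥ 0, then there is no finite multiset of May generators with total filtration s₁ and total degree t (this is the combinatorial content of the vanishing E₁^{s₁,t,*} = 0 in the May spectral sequence). -/
/-- A formal May spectral sequence generator: `a k`, `h i j`, or `b i j`. -/
inductive MayGen : Type
  | a (k : ℕ)
  | h (i j : ℕ)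
  | b (i j : ℕ)
  deriving DecidableEq

namespace MayGen

/-- Validity: the generators `h i j` and `b i j` require `i ≥ 1`. -/
def IsValid : MayGen → Prop
  | a _ => True
  | h i _ => 1 ≤ i
  | b i _ => 1 ≤ i

/-- May filtration of a generator. -/
def filt : MayGen → ℕ
  | a _ => 1
  | h _ _ => 1
  | b _ _ => 2

/-- Internal degree of a generator (at the prime `p`). -/
def deg (p : ℕ) : MayGen → ℕ
  | a k => 2 * p ^ k - 1
  | h i j => 2 * (p ^ i - 1) * p ^ j
  | b i j => 2 * (p ^ i - 1) * p ^ (j + 1)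

end MayGen

/-- Total filtration of a multiset of May generators. -/
def totalFilt (S : Multiset MayGen) : ℕ := (S.map MayGen.filt).sum

/-- Total internal degree of a multiset of May generators. -/
def totalDeg (p : ℕ) (S : Multiset MayGen) : ℕ := (S.map (MayGen.deg p)).sum

/-- An admissible monomial: each exterior generator `h i j` occurs at most once. -/
def Admissible (S : Multiset MayGen) : Prop := ∀ i j : ℕ, S.count (MayGen.h i j) ≤ 1

/-- The `j`-th digit (`j ≥ -1`) of `t` in the mixed radix `(q, p, p, …)` with
`q = 2(p-1)`:  `t = c₋₁ + q·Σ_{j≥0} c_j p^j` with `0 ≤ c₋₁ < q`, `0 ≤ c_j < p`. -/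
def mayDigit (p t : ℕ) (j : ℤ) : ℕ :=
  if j = -1 then t % (2 * (p - 1))
  else if 0 ≤ j then (t / (2 * (p - 1)) / p ^ j.toNat) % p
  else 0

/-!
With `q = 2(p-1)`, every generator has degree `ε + q · ∑ l ∈ I, p ^ l`, where `ε ≤ 1` and `I` is an
interval of digit positions. Summing over a monomial, the coefficient of `q · p ^ l` is the number
of generators whose interval contains `l`, so it is at most the number of generators, and hence at
most the total filtration. If that number is less than `p`, nothing carries and these coefficients
are the digits of the total degree.
-/

section PolynomialDigits

open Polynomial

theorem eval_div_pow_mod_eq_coeff {p : ℕ} {f : ℕ[X]} (hf : ∀ l, f.coeff l < p) (j : ℕ) :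
    f.eval p / p ^ j % p = f.coeff j := by
  have eval_eq (g : ℕ[X]) : g.eval p = g.coeff 0 + p * g.divX.eval p := by
    conv_lhs => rw [← g.divX_mul_X_add]
    simp only [eval_add, eval_mul_X, eval_C]
    ring
  induction j generalizing f with
  | zero => rw [pow_zero, Nat.div_one, eval_eq, Nat.add_mul_mod_self_left, Nat.mod_eq_of_lt (hf 0)]
  | succ j ih =>
    have eval_div : f.eval p / p = f.divX.eval p := by
      rw [eval_eq, Nat.add_mul_div_left _ _ (Nat.zero_lt_of_lt (hf 0)),
        Nat.div_eq_of_lt (hf 0), zero_add]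
    rw [pow_succ', ← Nat.div_div_eq_div_mul, eval_div,
      ih fun l ↦ by simpa only [coeff_divX] using hf (l + 1), coeff_divX]

theorem coeff_sum_X_pow {R : Type*} [Semiring R] (s : Finset ℕ) (j : ℕ) :
    (∑ l ∈ s, (X : R[X]) ^ l).coeff j = if j ∈ s then 1 else 0 := by
  simp only [finsetSum_coeff, coeff_X_pow, Finset.sum_ite_eq]

end PolynomialDigits

theorem sum_Ico_add_pow {R : Type*} [Semiring R] (x : R) (i j : ℕ) :
    ∑ l ∈ Finset.Ico j (i + j), x ^ l = x ^ j * ∑ l ∈ Finset.range i, x ^ l := by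
  simp only [Finset.sum_Ico_eq_sum_range, Nat.add_sub_cancel, pow_add, Finset.mul_sum]

theorem sum_Ico_add_pow_mul_sub_one {p : ℕ} (hp : 1 ≤ p) (i j : ℕ) :
    (∑ l ∈ Finset.Ico j (i + j), p ^ l) * (p - 1) = (p ^ i - 1) * p ^ j := by
  rw [sum_Ico_add_pow, mul_assoc, geom_sum_mul_of_one_le hp, mul_comm]

namespace MayGen

theorem one_le_filt (x : MayGen) : 1 ≤ x.filt := by
  cases x <;> simp only [filt, le_refl, Nat.one_le_ofNat]

/-- The contribution of a generator to the digit `c₋₁` of the total degree. -/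
def unitPart : MayGen → ℕ
  | a _ => 1
  | h _ _ => 0
  | b _ _ => 0

/-- The interval of indices `l ≥ 0` for which a generator contributes `1` to the digit `c_l` of the
total degree. -/
def digitSupport : MayGen → Finset ℕ
  | a k => Finset.range k
  | h i j => Finset.Ico j (i + j)
  | b i j => Finset.Ico (j + 1) (i + (j + 1))

theorem unitPart_le_one (x : MayGen) : x.unitPart ≤ 1 := by
  cases x <;> simp only [unitPart, le_refl, zero_le]

theorem deg_eq_unitPart_add {p : ℕ} (hp : 1 ≤ p) (x : MayGen) :
    x.deg p = x.unitPart + 2 * (p - 1) * ∑ l ∈ x.digitSupport, p ^ l := by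
  cases x with
  | a k =>
    have geom := geom_sum_mul_of_one_le hp k
    have one_le_pow : 1 ≤ p ^ k := Nat.one_le_pow _ _ hp
    rw [deg, unitPart, digitSupport, mul_assoc, mul_comm (p - 1), geom]
    omega
  | h i j =>
    rw [deg, unitPart, digitSupport, mul_assoc, ← sum_Ico_add_pow_mul_sub_one hp]
    ring
  | b i j =>
    rw [deg, unitPart, digitSupport, mul_assoc, ← sum_Ico_add_pow_mul_sub_one hp]
    ring

end MayGen

theorem card_le_totalFilt (S : Multiset MayGen) : S.card ≤ totalFilt S := by
  simpa [totalFilt] using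
    Multiset.sum_map_le_sum_map (fun _ ↦ 1) MayGen.filt fun x (_ : x ∈ S) ↦ x.one_le_filt

section TotalDegree

open Polynomial

/-- The total contribution of a multiset of generators to the digit `c₋₁`, before any carrying. -/
def totalUnitPart (S : Multiset MayGen) : ℕ := (S.map MayGen.unitPart).sum

/-- The polynomial whose `l`-th coefficient is the total contribution of a multiset of generators
to the digit `c_l`, before any carrying. -/
noncomputable def totalDigitPoly (S : Multiset MayGen) : ℕ[X] :=
  (S.map fun x ↦ ∑ l ∈ x.digitSupport, X ^ l).sum

theorem totalUnitPart_le_card (S : Multiset MayGen) : totalUnitPart S ≤ S.card := by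
  simpa [totalUnitPart] using
    Multiset.sum_map_le_sum_map MayGen.unitPart (fun _ ↦ 1) fun x (_ : x ∈ S) ↦ x.unitPart_le_one

theorem coeff_totalDigitPoly (S : Multiset MayGen) (l : ℕ) :
    (totalDigitPoly S).coeff l = S.countP (l ∈ ·.digitSupport) := by
  simp only [totalDigitPoly]
  induction S using Multiset.induction_on with
  | empty => simp
  | cons x S ih =>
    rw [Multiset.map_cons, Multiset.sum_cons, coeff_add, coeff_sum_X_pow, ih, Multiset.countP_cons,
      add_comm]

theorem coeff_totalDigitPoly_le_card (S : Multiset MayGen) (l : ℕ) :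
    (totalDigitPoly S).coeff l ≤ S.card :=
  (coeff_totalDigitPoly S l).trans_le (Multiset.countP_le_card _ S)

theorem eval_totalDigitPoly (p : ℕ) (S : Multiset MayGen) :
    (totalDigitPoly S).eval p = (S.map fun x ↦ ∑ l ∈ x.digitSupport, p ^ l).sum := by
  rw [totalDigitPoly, ← coe_evalRingHom, map_multiset_sum, Multiset.map_map]
  simp [eval_finsetSum]

theorem totalDeg_eq_totalUnitPart_add {p : ℕ} (hp : 1 ≤ p) (S : Multiset MayGen) :
    totalDeg p S = totalUnitPart S + 2 * (p - 1) * (totalDigitPoly S).eval p := by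
  simp only [totalDeg, totalUnitPart, MayGen.deg_eq_unitPart_add hp, Multiset.sum_map_add,
    Multiset.sum_map_mul_left, eval_totalDigitPoly]

end TotalDegree

theorem mayDigit_neg_one (p t : ℕ) : mayDigit p t (-1) = t % (2 * (p - 1)) := rfl

theorem mayDigit_natCast (p t j : ℕ) :
    mayDigit p t j = t / (2 * (p - 1)) / p ^ j % p := rfl

theorem mayDigit_neg_one_totalDeg_le_card {p : ℕ} (hp : 1 ≤ p) (S : Multiset MayGen) :
    mayDigit p (totalDeg p S) (-1) ≤ S.card := by
  rw [mayDigit_neg_one, totalDeg_eq_totalUnitPart_add hp, Nat.add_mul_mod_self_left]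
  exact (Nat.mod_le _ _).trans (totalUnitPart_le_card S)

theorem mayDigit_totalDeg_eq_coeff {p : ℕ} {S : Multiset MayGen} (hp : 2 ≤ p) (hS : S.card < p)
    (j : ℕ) : mayDigit p (totalDeg p S) j = (totalDigitPoly S).coeff j := by
  have unit_lt : totalUnitPart S < 2 * (p - 1) := by
    have unit_le := totalUnitPart_le_card S
    omega
  rw [mayDigit_natCast, totalDeg_eq_totalUnitPart_add (by omega),
    Nat.add_mul_div_left _ _ (by omega), Nat.div_eq_of_lt unit_lt, zero_add]
  exact eval_div_pow_mod_eq_coeff (fun l ↦ (coeff_totalDigitPoly_le_card S l).trans_lt hS) j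

theorem mayDigit_natCast_totalDeg_le_card {p : ℕ} (hp : 2 ≤ p) (S : Multiset MayGen) (j : ℕ) :
    mayDigit p (totalDeg p S) j ≤ S.card := by
  rcases lt_or_ge S.card p with hS | hS
  · exact (mayDigit_totalDeg_eq_coeff hp hS j).trans_le (coeff_totalDigitPoly_le_card S j)
  · exact (Nat.mod_lt _ (by omega)).le.trans hS

theorem stmt0_general {p : ℕ} (hp : 2 ≤ p) (S : Multiset MayGen) {j : ℤ} (hj : -1 ≤ j) :
    mayDigit p (totalDeg p S) j ≤ S.card := by
  obtain rfl | hj := hj.eq_or_lt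
  · exact mayDigit_neg_one_totalDeg_le_card (by omega) S
  · lift j to ℕ using (by omega)
    exact mayDigit_natCast_totalDeg_le_card hp S j

/-- if some digit `c_j(t)` (`j ≥ 0`) exceeds `s₁` with `0 < s₁ < p`, then
there is no finite multiset of May generators of total filtration `s₁` and total degree `t`. -/
theorem stmt0 (p : ℕ) (hp : p.Prime) (hp5 : 5 ≤ p) (s₁ : ℕ) (hs₁0 : 0 < s₁) (hs₁p : s₁ < p)
    (t : ℕ) (j : ℕ) (hj : s₁ < mayDigit p t (j : ℤ)) :
    ¬ ∃ S : Multiset MayGen, (∀ x ∈ S, x.IsValid) ∧ totalFilt S = s₁ ∧ totalDeg p S = t := by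
  rintro ⟨S, -, rfl, rfl⟩
  exact hj.not_ge ((stmt0_general hp.two_le S (by omega)).trans (card_le_totalFilt S))
end

section
/- Let p ≥ 5 be a prime, q = 2(p−1), and let s₁ be an integer with 0 < s₁ < q. Let t ≥ 0 be an integer with digits c_{-1}(t), c_0(t), c_1(t), …. If c_{-1}(t) > s₁, then there is no finite multiset of May generators with total filtration s₁ and total degree t (this is the combinatorial content of the vanishing E₁^{s₁,t,*} = 0 in the May spectral sequence). -/
/-!
Since `p ≡ 1` modulo `p - 1`, every `h i j` and `b i j` has degree `0` modulo `q = 2(p-1)`, while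
every `a k` has degree `1`. Hence the degree of a generator modulo `q` is at most its filtration.
As reduction modulo `q` is subadditive, this bound passes from generators to monomials: the digit
`c₋₁` of the total degree never exceeds the total filtration.
-/

theorem nat_add_mod_le_add (m n d : ℕ) : (m + n) % d ≤ m % d + n % d := by
  rw [Nat.add_mod]
  exact Nat.mod_le _ _

theorem two_mul_sub_one_dvd_two_mul_pow_sub_one (p i : ℕ) : 2 * (p - 1) ∣ 2 * (p ^ i - 1) :=
  Nat.mul_dvd_mul_left 2 (Nat.sub_one_dvd_pow_sub_one p i)

namespace MayGen

theorem deg_a_modEq_one {p : ℕ} (hp : 0 < p) (k : ℕ) : deg p (a k) ≡ 1 [MOD 2 * (p - 1)] := by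
  have hpk : 0 < p ^ k := Nat.pow_pos hp
  have hdeg : deg p (a k) = 2 * (p ^ k - 1) + 1 := by
    simp only [deg]
    omega
  rw [hdeg]
  exact (Nat.modEq_zero_iff_dvd.2 (two_mul_sub_one_dvd_two_mul_pow_sub_one p k)).add_right 1

theorem dvd_deg_h (p i j : ℕ) : 2 * (p - 1) ∣ deg p (h i j) :=
  (two_mul_sub_one_dvd_two_mul_pow_sub_one p i).mul_right _

theorem dvd_deg_b (p i j : ℕ) : 2 * (p - 1) ∣ deg p (b i j) :=
  (two_mul_sub_one_dvd_two_mul_pow_sub_one p i).mul_right _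

theorem deg_mod_le_filt {p : ℕ} (hp : 0 < p) (x : MayGen) : deg p x % (2 * (p - 1)) ≤ filt x := by
  cases x with
  | a k => exact (deg_a_modEq_one hp k).trans_le (Nat.mod_le 1 _)
  | h i j => exact (Nat.mod_eq_zero_of_dvd (dvd_deg_h p i j)).trans_le (Nat.zero_le _)
  | b i j => exact (Nat.mod_eq_zero_of_dvd (dvd_deg_b p i j)).trans_le (Nat.zero_le _)

end MayGen

theorem totalDeg_mod_le_totalFilt {p : ℕ} (hp : 0 < p) (S : Multiset MayGen) :
    totalDeg p S % (2 * (p - 1)) ≤ totalFilt S :=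
  calc totalDeg p S % (2 * (p - 1))
    _ ≤ ((S.map (MayGen.deg p)).map (· % (2 * (p - 1)))).sum :=
      Multiset.le_sum_of_subadditive (· % (2 * (p - 1))) (Nat.zero_mod _).le
        (fun m n ↦ nat_add_mod_le_add m n _) _
    _ = (S.map fun x ↦ MayGen.deg p x % (2 * (p - 1))).sum := by
      rw [Multiset.map_map, Function.comp_def]
    _ ≤ totalFilt S := Multiset.sum_map_le_sum_map _ _ fun x _ ↦ MayGen.deg_mod_le_filt hp x

theorem stmt1_general {p : ℕ} (hp : 1 < p) (S : Multiset MayGen) :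
    mayDigit p (totalDeg p S) (-1) ≤ totalFilt S :=
  (mayDigit_neg_one p _).trans_le (totalDeg_mod_le_totalFilt (Nat.zero_lt_of_lt hp) S)

/-- if `c₋₁(t) > s₁` with `0 < s₁ < q = 2(p-1)`, then there is no finite
multiset of May generators of total filtration `s₁` and total degree `t`. -/
theorem stmt1 (p : ℕ) (hp : p.Prime) (hp5 : 5 ≤ p) (s₁ : ℕ) (hs₁0 : 0 < s₁)
    (hs₁q : s₁ < 2 * (p - 1)) (t : ℕ) (hdig : s₁ < mayDigit p t (-1)) :
    ¬ ∃ S : Multiset MayGen, (∀ x ∈ S, x.IsValid) ∧ totalFilt S = s₁ ∧ totalDeg p S = t := by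
  rintro ⟨S, -, rfl, rfl⟩
  exact (stmt1_general hp.one_lt S).not_gt hdig
end

section
/- Let p ≥ 5 be a prime, q = 2(p−1), and let x₁, …, x_m be May generators each of filtration 1 (i.e., each is some a_k or some h_{i,j}); for j ≥ −1 set c̄_j = Σ_{i=1}^{m} c_j(deg x_i). Suppose i₃ ≥ 0 is an integer such that c̄_j = 0 for every j > i₃. Then at least (c̄_{−1} + c̄_{i₃} − m) of the generators x₁, …, x_m are equal to a_{i₃+1}. -/
/-!
Since `(p ^ i - 1) / (p - 1)` is a repunit in base `p`, the degree of a generator `x` is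
`ε + q * ∑ e ∈ s, p ^ e`, where `s` is an interval of exponents and `ε` is `1` for `x = a k`, `0`
otherwise. So `ε` is the digit `c₋₁` of `deg x`, and each of its other digits is the indicator
of `s`. As `a k` has `s = [0, k)`, every generator satisfies
`c₋₁ + c_l ≤ [x = a (l + 1)] + 1 + c_{l+1}`, and these inequalities are summed over `S`.
-/

section PowerSums

open Finset

theorem sum_pow_div_pow {p : ℕ} (hp : 2 ≤ p) (s : Finset ℕ) (l : ℕ) :
    (∑ e ∈ s, p ^ e) / p ^ l = ∑ e ∈ s with l ≤ e, p ^ (e - l) := by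
  have low_lt : ∑ e ∈ s with ¬ l ≤ e, p ^ e < p ^ l :=
    Nat.geomSum_lt hp fun e he ↦ not_le.1 (mem_filter.1 he).2
  have high_eq : ∑ e ∈ s with l ≤ e, p ^ e = p ^ l * ∑ e ∈ s with l ≤ e, p ^ (e - l) := by
    rw [mul_sum]
    exact sum_congr rfl fun e he ↦ (pow_mul_pow_sub p (mem_filter.1 he).2).symm
  rw [← sum_filter_add_sum_filter_not s (l ≤ ·), high_eq, Nat.mul_add_div (by positivity),
    Nat.div_eq_of_lt low_lt, add_zero]

theorem sum_pow_div_pow_mod {p : ℕ} (hp : 2 ≤ p) (s : Finset ℕ) (l : ℕ) :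
    (∑ e ∈ s, p ^ e) / p ^ l % p = if l ∈ s then 1 else 0 := by
  have term_mod : ∀ e ∈ s.filter (l ≤ ·), p ^ (e - l) % p = if l = e then 1 else 0 := by
    intro e he
    rcases (mem_filter.1 he).2.eq_or_lt with rfl | hlt
    · simp [Nat.mod_eq_of_lt hp]
    · rw [if_neg hlt.ne]
      exact Nat.mod_eq_zero_of_dvd (dvd_pow_self p (Nat.sub_pos_of_lt hlt).ne')
  rw [sum_pow_div_pow hp, sum_nat_mod, sum_congr rfl term_mod, sum_ite_eq]
  simp only [mem_filter, le_refl, and_true]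
  split_ifs
  exacts [Nat.mod_eq_of_lt hp, Nat.zero_mod p]

theorem pow_sub_one_mul_pow_eq_sum_Ico {p : ℕ} (hp : 1 ≤ p) (i j : ℕ) :
    (p ^ i - 1) * p ^ j = (p - 1) * ∑ e ∈ Ico j (j + i), p ^ e := by
  have shift : ∑ e ∈ Ico j (j + i), p ^ e = (∑ e ∈ range i, p ^ e) * p ^ j := by
    simp only [sum_Ico_eq_sum_range, add_tsub_cancel_left, pow_add, sum_mul, mul_comm]
  rw [shift, ← geom_sum_mul_of_one_le hp]
  ring

end PowerSums

theorem mayDigit_neg_one_add_mul {p r : ℕ} (hr : r < 2 * (p - 1)) (n : ℕ) :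
    mayDigit p (r + 2 * (p - 1) * n) (-1) = r := by
  simp [mayDigit, Nat.mod_eq_of_lt hr]

theorem mayDigit_natCast_add_mul {p r : ℕ} (hr : r < 2 * (p - 1)) (n l : ℕ) :
    mayDigit p (r + 2 * (p - 1) * n) (l : ℤ) = n / p ^ l % p := by
  have quotient_eq : (r + 2 * (p - 1) * n) / (2 * (p - 1)) = n := by
    rw [Nat.add_mul_div_left _ _ (by omega), Nat.div_eq_of_lt hr, zero_add]
  rw [mayDigit, if_neg (by omega), if_pos (by omega), Int.toNat_natCast, quotient_eq]

namespace MayGen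

/-- The residue of the degree of a generator modulo `q = 2 * (p - 1)`, in the form that does not
depend on `p`; see `deg_eq`. -/
def degResidue : MayGen → ℕ
  | a _ => 1
  | h _ _ => 0
  | b _ _ => 0

/-- The exponents `e` of the powers `p ^ e` that sum to the quotient of the degree of a generator
by `q = 2 * (p - 1)`; see `deg_eq`. -/
def degExponents : MayGen → Finset ℕ
  | a k => Finset.range k
  | h i j => Finset.Ico j (j + i)
  | b i j => Finset.Ico (j + 1) (j + 1 + i)

theorem degResidue_le_one (x : MayGen) : x.degResidue ≤ 1 := by
  cases x <;> simp only [degResidue, le_refl, zero_le_one]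

theorem deg_eq {p : ℕ} (hp : 1 ≤ p) (x : MayGen) :
    x.deg p = x.degResidue + 2 * (p - 1) * ∑ e ∈ x.degExponents, p ^ e := by
  cases x with
  | a k =>
    have one_le_pow : 1 ≤ p ^ k := Nat.one_le_pow k p hp
    have repunit : (p - 1) * ∑ e ∈ Finset.range k, p ^ e = p ^ k - 1 := by
      rw [mul_comm, geom_sum_mul_of_one_le hp]
    simp only [deg, degResidue, degExponents, mul_assoc, repunit]
    omega
  | h i j | b i j =>
    simp only [deg, degResidue, degExponents, mul_assoc, pow_sub_one_mul_pow_eq_sum_Ico hp,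
      zero_add]

theorem mayDigit_deg_neg_one {p : ℕ} (hp : 2 ≤ p) (x : MayGen) :
    mayDigit p (x.deg p) (-1) = x.degResidue := by
  have := x.degResidue_le_one
  rw [deg_eq (by omega), mayDigit_neg_one_add_mul (by omega)]

theorem mayDigit_deg_natCast {p : ℕ} (hp : 2 ≤ p) (x : MayGen) (l : ℕ) :
    mayDigit p (x.deg p) (l : ℤ) = if l ∈ x.degExponents then 1 else 0 := by
  have := x.degResidue_le_one
  rw [deg_eq (by omega), mayDigit_natCast_add_mul (by omega), sum_pow_div_pow_mod hp]

theorem mayDigit_deg_add_le {p : ℕ} (hp : 2 ≤ p) (x : MayGen) (l : ℕ) :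
    mayDigit p (x.deg p) (-1) + mayDigit p (x.deg p) (l : ℤ) ≤
      (if a (l + 1) = x then 1 else 0) + 1 + mayDigit p (x.deg p) ((l + 1 : ℕ) : ℤ) := by
  simp only [mayDigit_deg_neg_one hp, mayDigit_deg_natCast hp]
  cases x with
  | a k =>
    simp only [degResidue, degExponents, Finset.mem_range, a.injEq]
    split_ifs <;> omega
  | h i j | b i j =>
    simp only [degResidue]
    split_ifs <;> omega

end MayGen

theorem stmt5_general {p : ℕ} (hp : 2 ≤ p) (S : Multiset MayGen) (l : ℕ) :
    (S.map fun x ↦ mayDigit p (x.deg p) (-1)).sum +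
        (S.map fun x ↦ mayDigit p (x.deg p) (l : ℤ)).sum ≤
      S.count (MayGen.a (l + 1)) + Multiset.card S +
        (S.map fun x ↦ mayDigit p (x.deg p) ((l + 1 : ℕ) : ℤ)).sum := by
  induction S using Multiset.induction_on with
  | empty => simp
  | cons x S ih =>
    have head_le := x.mayDigit_deg_add_le hp l
    simp only [Multiset.map_cons, Multiset.sum_cons, Multiset.count_cons, Multiset.card_cons]
    omega

/-- if all generators of `S` have filtration `1` and the digit sums `c̄_j`
vanish for `j > i₃`, then at least `c̄_{-1} + c̄_{i₃} - m` members of `S` equal `a (i₃+1)`. -/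
theorem stmt5 (p : ℕ) (hp : p.Prime) (hp5 : 5 ≤ p) (S : Multiset MayGen)
    (hval : ∀ x ∈ S, x.IsValid) (hfilt : ∀ x ∈ S, x.filt = 1)
    (i₃ : ℕ)
    (hzero : ∀ j : ℤ, (i₃ : ℤ) < j →
      (S.map (fun x => mayDigit p (MayGen.deg p x) j)).sum = 0) :
    (S.map (fun x => mayDigit p (MayGen.deg p x) (-1 : ℤ))).sum +
      (S.map (fun x => mayDigit p (MayGen.deg p x) (i₃ : ℤ))).sum ≤
    S.count (MayGen.a (i₃ + 1)) + Multiset.card S := by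
  simpa only [hzero ((i₃ + 1 : ℕ) : ℤ) (by omega), add_zero] using
    stmt5_general (by omega : 2 ≤ p) S i₃
end

section
/- Let p ≥ 5 be a prime, q = 2(p−1), and let m, n, s be integers with n ≥ m+2 > 5 and 2 ≤ s ≤ p−2. Then there is no admissible monomial of total filtration s+2 and total degree q(p^n + p^m + sp + s) + s − 2. (This is the combinatorial content of the vanishing E₁^{s+2, t(s)+s−2, *} = 0 in the May spectral sequence, where t(s) = q(p^n + p^m + sp + s), for the case r = 1 and s < p−1 of Lemma 3.1.) -/
/-! Each generator has internal degree `ε + q ∑ pᵏ`, with `k` running over an interval of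
positions and `ε = 1` exactly for the `a k`. So a monomial of the stated degree has `s - 2` factors
`a k`, and the numbers `c j` of its factors covering position `j` satisfy
`∑ c j * p ^ j = p ^ n + p ^ m + s * p + s` with `c j ≤ s + 2 ≤ p`. Comparing low digits gives
`c 0 = c 1 = s` and leaves two possibilities.

* `c 2 = 0`. No interval joins position `1` to a position above `2`, so `c j ≤ 2` for `j > 2` and
  the `c j` are the base-`p` digits of the right-hand side. The `s` factors through `1`, one through
  `m` and one through `n` (distinct, as `c (m + 1) = 0`) exhaust the filtration, so the `s` factors
  through `0` have the interval `{0, 1}`. At most `s - 2` of them are of the form `a k`, so `h 2 0`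
  occurs twice.
* `c 2 = p`, with a carry. Then all factors pass through `2`, so `c` is antitone from there on,
  whereas the carry forces `c m = 0` and `c n = 1`. -/

open Polynomial

namespace MayGen

/-- The interval of positions `k` whose powers `p ^ k` make up the degree of a generator. -/
def block : MayGen → Finset ℕ
  | a k => Finset.Ico 0 k
  | h i j => Finset.Ico j (j + i)
  | b i j => Finset.Ico (j + 1) (j + 1 + i)

/-- The indicator of the generators `a k`, which is the residue of the degree modulo `q`. -/
def aIndicator : MayGen → ℕ
  | a _ => 1
  | h _ _ => 0
  | b _ _ => 0

theorem aIndicator_le_filt (x : MayGen) : x.aIndicator ≤ x.filt := by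
  cases x <;> simp [aIndicator, filt]

theorem cast_deg {p : ℕ} (hp : 0 < p) (x : MayGen) :
    (x.deg p : ℤ) = x.aIndicator + 2 * (p - 1) * ∑ k ∈ x.block, (p : ℤ) ^ k := by
  have hpow (k : ℕ) : 1 ≤ p ^ k := Nat.one_le_pow k p hp
  have hgeom (j i : ℕ) : (∑ k ∈ Finset.Ico j (j + i), (p : ℤ) ^ k) * (p - 1) =
      (p ^ i - 1) * p ^ j := by
    rw [geom_sum_Ico_mul _ (Nat.le_add_right j i)]
    ring
  cases x with
  | a k =>
    have hk := hgeom 0 k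
    have hle : 1 ≤ 2 * p ^ k := by linarith [hpow k]
    rw [zero_add] at hk
    simp only [deg, aIndicator, block]
    push_cast [hle]
    linear_combination -2 * hk
  | h i j =>
    simp only [deg, aIndicator, block]
    push_cast [hpow i]
    linear_combination -2 * hgeom j i
  | b i j =>
    simp only [deg, aIndicator, block]
    push_cast [hpow i]
    linear_combination -2 * hgeom (j + 1) i

end MayGen

open MayGen

/-- The number of factors of a monomial whose block contains position `j`. -/
def cover (S : Multiset MayGen) (j : ℕ) : ℕ := S.countP (j ∈ ·.block)

/-- The number of factors `a k` of a monomial. -/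
def numA (S : Multiset MayGen) : ℕ := (S.map aIndicator).sum

/-- The generating polynomial of `cover S`, whose value at `p` is the part of the degree divisible
by `q`, over `q`. Its coefficients are taken in `ℤ` so that digits can be subtracted. -/
noncomputable def coverPoly (S : Multiset MayGen) : ℤ[X] :=
  (S.map fun x => ∑ k ∈ x.block, X ^ k).sum

theorem coeff_coverPoly (S : Multiset MayGen) (j : ℕ) : (coverPoly S).coeff j = cover S j := by
  induction S using Multiset.induction_on with
  | empty => simp [coverPoly, cover]
  | cons x S ih =>
    simp only [coverPoly, cover] at ih ⊢
    simp [ih, Multiset.countP_cons, coeff_X_pow, add_comm]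

theorem cast_totalDeg {p : ℕ} (hp : 0 < p) (S : Multiset MayGen) :
    (totalDeg p S : ℤ) = numA S + 2 * (p - 1) * (coverPoly S).eval (p : ℤ) := by
  induction S using Multiset.induction_on with
  | empty => simp [totalDeg, numA, coverPoly]
  | cons x S ih =>
    simp only [totalDeg, numA, coverPoly] at ih ⊢
    simp only [Multiset.map_cons, Multiset.sum_cons, Nat.cast_add, ih, cast_deg hp, eval_add,
      eval_finsetSum, eval_pow, eval_X]
    ring

section FiltrationBounds

variable (S : Multiset MayGen)

theorem numA_le_totalFilt : numA S ≤ totalFilt S :=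
  Multiset.sum_map_le_sum_map _ _ fun x _ => x.aIndicator_le_filt

theorem cover_add_cover_le {i j k : ℕ} (hij : i ≤ j) (hjk : j ≤ k) :
    cover S i + cover S k ≤ cover S j + totalFilt S := by
  induction S using Multiset.induction_on with
  | empty => simp [cover, totalFilt]
  | cons x S ih =>
    simp only [cover, totalFilt, Multiset.countP_cons, Multiset.map_cons, Multiset.sum_cons] at ih ⊢
    have hx : (if i ∈ x.block then 1 else 0) + (if k ∈ x.block then 1 else 0) ≤
        (if j ∈ x.block then 1 else 0) + x.filt := by
      cases x <;> grind [block, filt]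
    omega

theorem cover_le_totalFilt (j : ℕ) : cover S j ≤ totalFilt S := by
  have := cover_add_cover_le S le_rfl (le_refl j)
  omega

theorem cover_zero_le :
    cover S 0 ≤ cover S 2 + numA S + S.count (h 1 0) + S.count (h 2 0) := by
  induction S using Multiset.induction_on with
  | empty => simp [cover]
  | cons x S ih =>
    simp only [cover, numA, Multiset.countP_cons, Multiset.count_cons, Multiset.map_cons,
      Multiset.sum_cons] at ih ⊢
    have hx : (if 0 ∈ x.block then 1 else 0) ≤ (if 2 ∈ x.block then 1 else 0) + x.aIndicator +
        (if h 1 0 = x then 1 else 0) + (if h 2 0 = x then 1 else 0) := by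
      cases x <;> grind [block, aIndicator]
    omega

theorem cover_add_count_h_one_zero_le {m n : ℕ} (hm : 2 ≤ m) (hmn : m < n) :
    cover S 1 + cover S m + cover S n + S.count (h 1 0) ≤
      totalFilt S + cover S 2 + cover S (m + 1) := by
  induction S using Multiset.induction_on with
  | empty => simp [cover]
  | cons x S ih =>
    simp only [cover, totalFilt, Multiset.countP_cons, Multiset.count_cons, Multiset.map_cons,
      Multiset.sum_cons] at ih ⊢
    have hx : (if 1 ∈ x.block then 1 else 0) + (if m ∈ x.block then 1 else 0) +
        (if n ∈ x.block then 1 else 0) + (if h 1 0 = x then 1 else 0) ≤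
        x.filt + (if 2 ∈ x.block then 1 else 0) + (if m + 1 ∈ x.block then 1 else 0) := by
      cases x <;> grind [block, filt]
    omega

end FiltrationBounds

theorem digit_eq_of_add_mul_eq {b c d w v : ℤ} (h : c + b * w = d + b * v) (hcd : |c - d| < b) :
    c = d ∧ w = v := by
  have hc : c = d := sub_eq_zero.mp <|
    Int.eq_zero_of_abs_lt_dvd ⟨v - w, by linear_combination h⟩ hcd
  have hb : b ≠ 0 := ((abs_nonneg _).trans_lt hcd).ne'
  exact ⟨hc, mul_left_cancel₀ hb (by linear_combination h - hc)⟩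

theorem eval_eq_coeff_zero_add {R : Type*} [CommSemiring R] (P : R[X]) (b : R) :
    P.eval b = P.coeff 0 + b * P.divX.eval b := by
  conv_lhs => rw [← divX_mul_X_add P]
  simp only [eval_add, eval_mul, eval_X, eval_C]
  ring

theorem eq_of_eval_eq_of_abs_coeff_sub_lt {b : ℤ} {P Q : ℤ[X]} (heval : P.eval b = Q.eval b)
    (hcoeff : ∀ j, |P.coeff j - Q.coeff j| < b) : P = Q := by
  ext j
  induction j generalizing P Q with
  | zero =>
    rw [eval_eq_coeff_zero_add P, eval_eq_coeff_zero_add Q] at heval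
    exact (digit_eq_of_add_mul_eq heval (hcoeff 0)).1
  | succ j ih =>
    rw [eval_eq_coeff_zero_add P, eval_eq_coeff_zero_add Q] at heval
    simpa only [coeff_divX] using ih (digit_eq_of_add_mul_eq heval (hcoeff 0)).2
      fun k => by simpa only [coeff_divX] using hcoeff (k + 1)

section Digits

variable {p m n s : ℕ} {S : Multiset MayGen}

theorem numA_eq_and_eval_coverPoly_eq (hs : 2 ≤ s) (hsp : s + 2 ≤ p) (hfilt : totalFilt S ≤ s + 2)
    {t : ℕ} (hdeg : totalDeg p S = 2 * (p - 1) * t + (s - 2)) :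
    numA S = s - 2 ∧ (coverPoly S).eval (p : ℤ) = t := by
  have hA := numA_le_totalFilt S
  have hcast : (totalDeg p S : ℤ) = 2 * (p - 1) * t + (s - 2 : ℕ) := by
    rw [hdeg]
    push_cast [show 1 ≤ p by omega]
    ring
  rw [cast_totalDeg (by omega)] at hcast
  have hdigit := digit_eq_of_add_mul_eq (hcast.trans (add_comm _ _)) (by rw [abs_lt]; omega)
  exact ⟨by exact_mod_cast hdigit.1, hdigit.2⟩

theorem cover_low_digits (hm : 4 ≤ m) (hmn : m ≤ n) (hs : 2 ≤ s) (hsp : s + 2 ≤ p)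
    (hfilt : totalFilt S ≤ s + 2)
    (heval : (coverPoly S).eval (p : ℤ) = p ^ n + p ^ m + s * p + s) :
    cover S 0 = s ∧ cover S 1 = s ∧ (cover S 2 = 0 ∨ cover S 2 = p ∧ cover S 3 + 1 = p) := by
  have hle (j : ℕ) := (cover_le_totalFilt S j).trans hfilt
  have hle0 := hle 0
  have hle1 := hle 1
  have hle2 := hle 2
  have hle3 := hle 3
  obtain ⟨m, rfl⟩ := Nat.exists_eq_add_of_le' hm
  obtain ⟨n, rfl⟩ := Nat.exists_eq_add_of_le' (hm.trans hmn)
  have hexp : (p ^ (n + 4) + p ^ (m + 4) + s * p + s : ℤ) =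
      s + p * (s + p * (0 + p * (p * (p ^ n + p ^ m)))) := by ring
  rw [hexp, eval_eq_coeff_zero_add, eval_eq_coeff_zero_add (divX _),
    eval_eq_coeff_zero_add (divX (divX _)), eval_eq_coeff_zero_add (divX (divX (divX _)))] at heval
  simp only [coeff_divX, coeff_coverPoly, zero_add, Nat.reduceAdd] at heval
  generalize eval (p : ℤ) (divX _) = t at heval
  obtain ⟨hc0, htail1⟩ := digit_eq_of_add_mul_eq heval (by rw [abs_lt]; omega)
  obtain ⟨hc1, htail2⟩ := digit_eq_of_add_mul_eq htail1 (by rw [abs_lt]; omega)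
  refine ⟨by exact_mod_cast hc0, by exact_mod_cast hc1, ?_⟩
  obtain hc2 | hc2 : cover S 2 < p ∨ cover S 2 = p := by omega
  · left
    have hdigit := htail2.trans (zero_add _).symm
    exact_mod_cast (digit_eq_of_add_mul_eq hdigit (by rw [abs_lt]; omega)).1
  · right
    have hcarry : (cover S 3 + p * t : ℤ) = (p - 1) + p * (p ^ n + p ^ m - 1) := by
      refine mul_left_cancel₀ (show (p : ℤ) ≠ 0 by omega) ?_
      rw [hc2] at htail2
      linear_combination htail2
    have hc3 := (digit_eq_of_add_mul_eq hcarry (by rw [abs_lt]; omega)).1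
    omega

theorem coverPoly_eq_of_cover_two_eq_zero (hs : 2 ≤ s) (hsp : s + 2 ≤ p)
    (hfilt : totalFilt S ≤ s + 2)
    (heval : (coverPoly S).eval (p : ℤ) = p ^ n + p ^ m + s * p + s)
    (h0 : cover S 0 = s) (h1 : cover S 1 = s) (h2 : cover S 2 = 0) :
    coverPoly S = X ^ n + X ^ m + C (s : ℤ) * X + C (s : ℤ) := by
  have hsmall (j : ℕ) (hj : 2 ≤ j) : cover S j ≤ 2 := by
    have := cover_add_cover_le S one_le_two hj
    omega
  refine eq_of_eval_eq_of_abs_coeff_sub_lt (b := p) (by simpa using heval) fun j => ?_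
  simp only [coeff_coverPoly, coeff_add, coeff_X_pow, coeff_C_mul, coeff_X, coeff_C]
  grind

-- The right-hand side is `X ^ n + X ^ m + s X + s` plus `(p - X) (X ^ 2 + ⋯ + X ^ (m - 1))`.
theorem coverPoly_eq_of_cover_two_eq (hm : 3 ≤ m) (hmn : m ≤ n) (hsp : s + 2 ≤ p)
    (hfilt : totalFilt S ≤ s + 2)
    (heval : (coverPoly S).eval (p : ℤ) = p ^ n + p ^ m + s * p + s)
    (h0 : cover S 0 = s) (h1 : cover S 1 = s) (h2 : cover S 2 = p) (h3 : cover S 3 + 1 = p) :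
    coverPoly S = X ^ n + ∑ i ∈ Finset.Ico 3 m, C (p - 1 : ℤ) * X ^ i + C (p : ℤ) * X ^ 2 +
      C (s : ℤ) * X + C (s : ℤ) := by
  have hlt (j : ℕ) (hj : 3 ≤ j) : cover S j < p := by
    have := cover_add_cover_le S (show 2 ≤ 3 by omega) hj
    omega
  refine eq_of_eval_eq_of_abs_coeff_sub_lt (b := p) ?_ fun j => ?_
  · have hgeom := geom_sum_Ico_mul (p : ℤ) hm
    simp only [heval, eval_add, eval_finsetSum, eval_mul, eval_pow, eval_X, eval_C,
      ← Finset.mul_sum]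
    linear_combination -hgeom
  simp only [coeff_coverPoly, coeff_add, finsetSum_coeff, coeff_X_pow, coeff_C_mul, coeff_X,
    coeff_C, mul_ite, mul_one, mul_zero, Finset.sum_ite_eq, Finset.mem_Ico]
  grind

theorem two_le_count_h_two_zero (hm : 2 ≤ m) (hmn : m + 2 ≤ n) (hs : 2 ≤ s) (hsp : s + 2 ≤ p)
    (hfilt : totalFilt S ≤ s + 2)
    (heval : (coverPoly S).eval (p : ℤ) = p ^ n + p ^ m + s * p + s)
    (hA : numA S = s - 2) (h0 : cover S 0 = s) (h1 : cover S 1 = s) (h2 : cover S 2 = 0) :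
    2 ≤ S.count (h 2 0) := by
  have hP := coverPoly_eq_of_cover_two_eq_zero hs hsp hfilt heval h0 h1 h2
  have hcoeff (j : ℕ) := (coeff_coverPoly S j).symm.trans (congrArg (coeff · j) hP)
  simp only [coeff_add, coeff_X_pow, coeff_C_mul, coeff_X, coeff_C] at hcoeff
  have hcm : cover S m = 1 := by grind
  have hcm1 : cover S (m + 1) = 0 := by grind
  have hcn : cover S n = 1 := by grind
  have hh10 := cover_add_count_h_one_zero_le S hm (show m < n by omega)
  have hh20 := cover_zero_le S
  omega

theorem cover_two_ne (hm : 3 ≤ m) (hmn : m < n) (hsp : s + 2 ≤ p)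
    (hfilt : totalFilt S ≤ s + 2)
    (heval : (coverPoly S).eval (p : ℤ) = p ^ n + p ^ m + s * p + s)
    (h0 : cover S 0 = s) (h1 : cover S 1 = s) (h3 : cover S 3 + 1 = p) : cover S 2 ≠ p := by
  intro h2
  have hP := coverPoly_eq_of_cover_two_eq hm hmn.le hsp hfilt heval h0 h1 h2 h3
  have hcoeff (j : ℕ) := (coeff_coverPoly S j).symm.trans (congrArg (coeff · j) hP)
  simp only [coeff_add, finsetSum_coeff, coeff_X_pow, coeff_C_mul, coeff_X, coeff_C, mul_ite,
    mul_one, mul_zero, Finset.sum_ite_eq, Finset.mem_Ico] at hcoeff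
  have hcm : cover S m = 0 := by grind
  have hcn : cover S n = 1 := by grind
  have := cover_add_cover_le S (show 2 ≤ m by omega) hmn.le
  omega

end Digits

theorem stmt7_general {p m n s : ℕ} (hm : 4 ≤ m) (hmn : m + 2 ≤ n) (hs : 2 ≤ s) (hsp : s + 2 ≤ p)
    {S : Multiset MayGen} (hcount : S.count (h 2 0) ≤ 1) (hfilt : totalFilt S ≤ s + 2) :
    totalDeg p S ≠ 2 * (p - 1) * (p ^ n + p ^ m + s * p + s) + (s - 2) := by
  intro hdeg
  obtain ⟨hA, heval⟩ := numA_eq_and_eval_coverPoly_eq hs hsp hfilt hdeg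
  push_cast at heval
  obtain ⟨h0, h1, h2 | ⟨h2, h3⟩⟩ := cover_low_digits hm (by omega) hs hsp hfilt heval
  · have := two_le_count_h_two_zero (by omega) hmn hs hsp hfilt heval hA h0 h1 h2
    omega
  · exact cover_two_ne (by omega) (by omega) hsp hfilt heval h0 h1 h3 h2

/-- for `n ≥ m+2 > 5` and `2 ≤ s ≤ p-2`, there is no admissible monomial of
total filtration `s+2` and total degree `q(pⁿ + pᵐ + sp + s) + s - 2`. -/
theorem stmt7 (p : ℕ) (hp : p.Prime) (hp5 : 5 ≤ p) (m n s : ℕ)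
    (hmn : m + 2 ≤ n) (hm : 5 < m + 2) (hs2 : 2 ≤ s) (hsp : s ≤ p - 2) :
    ¬ ∃ S : Multiset MayGen, (∀ x ∈ S, x.IsValid) ∧ Admissible S ∧
      totalFilt S = s + 2 ∧
      totalDeg p S = 2 * (p - 1) * (p ^ n + p ^ m + s * p + s) + (s - 2) := by
  rintro ⟨S, -, hadm, hfilt, hdeg⟩
  exact stmt7_general (by omega) hmn hs2 (by omega) (hadm 2 0) hfilt.le hdeg
end

section
/- Let p ≥ 5 be a prime, q = 2(p−1), and let m, n be integers with n ≥ m+2 > 5. Then the admissible monomials of total filtration p+1 and total degree q(p^n + p^m + p² − 1) + p − 3 are exactly the following seven multisets: (1) a_n with multiplicity p−3 together with h_{3,0}, h_{1,m}, h_{n−2,2}, h_{n,0}; (2) a_n with multiplicity p−3 together with h_{1,2}, h_{m+1,0}, h_{n−m,m}, h_{n,0}; (3) a_{m+1} once and a_n with multiplicity p−4 together with h_{3,0}, h_{n−m,m}, h_{n−2,2}, h_{n,0}; (4) a_n with multiplicity p−3 together with h_{3,0}, h_{m−1,2}, h_{n−m,m}, h_{n,0}; (5) a_n with multiplicity p−3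 together with h_{3,0}, h_{m+1,0}, h_{n−m,m}, h_{n−2,2}; (6) a₃ once and a_n with multiplicity p−4 together with h_{m+1,0}, h_{n−m,m}, h_{n−2,2}, h_{n,0}; (7) a_m with multiplicity p−3 together with h_{3,0}, h_{m,0}, h_{m−2,2}, h_{1,n}. (This is the combinatorial content of Lemma 3.1 in the case r = 1, s = p−1: the May E₁-term E₁^{p+1, t(p−1)+p−3, *} has Z_p-basis g₁, …, g₇.) -/
/-!
At the prime `p`, the degree of a generator is `2 (p - 1) (p ^ s + ⋯ + p ^ (e - 1))`, plus `1` for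
the `a k`: a generator is an interval `[s, e)`. A monomial of filtration `p + 1` has at most `p + 1`
factors, so reducing its degree modulo `2 (p - 1)` shows that exactly `p - 3` of them are `a`'s, and
if `c j` denotes the number of intervals which contain `j`, then
`∑ c j p ^ j + 1 = p ^ 2 + p ^ m + p ^ n`. Adding `1` to the digits `c j` makes a carry that runs up
to one of the places `r` among `2`, `m`, `n`, and no second carry is possible. Hence `c` is
`p - 1` times the indicator of `[0, r)` plus the indicators of the other two places `u` and `v`.
Since all `p + 1` factors are needed to produce the rises of `c`, the multisets of left and of right
ends are determined by `r`, and there is no room for a factor `b`. What remains is to match left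
ends with right ends: no `h` may be repeated, so the two of them starting at `0` have distinct right
ends. This is impossible for `r = 2`, leaves one way for `r = m` and six ways for `r = n`.
-/

/-! ### Carries and powers of `p` -/

theorem exists_carry {p N b₀ : ℕ} {c t : ℕ → ℕ} (hc : ∀ j, c j + 1 < 2 * p) (ht : ∀ j, t j < p)
    (hcN : ∀ j, N ≤ j → c j = 0) (htN : ∀ j, N ≤ j → t j = 0) (hb₀ : b₀ ≤ 1)
    (h : ∑ i ∈ Finset.range N, c i * p ^ i + b₀ = ∑ i ∈ Finset.range N, t i * p ^ i) :
    ∃ b : ℕ → ℕ, b 0 = b₀ ∧ b N = 0 ∧ ∀ j, b j ≤ 1 ∧ c j + b j = t j + p * b (j + 1) := by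
  induction N generalizing c t b₀ with
  | zero =>
    refine ⟨0, ?_, rfl, fun j => ?_⟩
    · simpa using h.symm
    · simp [hcN j (Nat.zero_le j), htN j (Nat.zero_le j)]
  | succ N ih =>
    have hdigit := ht 0
    have hdiv : c 0 + b₀ + p * ∑ i ∈ Finset.range N, c (i + 1) * p ^ i
        = t 0 + p * ∑ i ∈ Finset.range N, t (i + 1) * p ^ i := by
      simp only [Finset.sum_range_succ', pow_succ', pow_zero, mul_one, mul_left_comm _ p,
        ← Finset.mul_sum] at h
      linarith
    have hmod : (c 0 + b₀) % p = t 0 := by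
      simpa [Nat.add_mul_mod_self_left, Nat.mod_eq_of_lt hdigit] using congrArg (· % p) hdiv
    have hcarry : c 0 + b₀ = t 0 + p * ((c 0 + b₀) / p) := by
      rw [← hmod, Nat.mod_add_div]
    have hcarry_le : (c 0 + b₀) / p ≤ 1 := by
      have := hc 0
      exact Nat.le_of_lt_succ (Nat.div_lt_of_lt_mul (by omega))
    have htail : ∑ i ∈ Finset.range N, c (i + 1) * p ^ i + (c 0 + b₀) / p
        = ∑ i ∈ Finset.range N, t (i + 1) * p ^ i :=
      Nat.eq_of_mul_eq_mul_left (Nat.zero_lt_of_lt hdigit) (by linarith)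
    obtain ⟨b, hb_zero, hbN, hb⟩ := ih (fun j => hc (j + 1)) (fun j => ht (j + 1))
      (fun j hj => hcN (j + 1) (by omega)) (fun j hj => htN (j + 1) (by omega)) hcarry_le htail
    refine ⟨fun | 0 => b₀ | j + 1 => b j, rfl, hbN, fun j => ?_⟩
    cases j with
    | zero => exact ⟨hb₀, by simpa only [hb_zero] using hcarry⟩
    | succ j => exact hb j

theorem exists_last_carry {p N : ℕ} {b c t : ℕ → ℕ} (hb_zero : b 0 = 1) (hbN : b N = 0)
    (hb : ∀ j, b j ≤ 1 ∧ c j + b j = t j + p * b (j + 1)) (ht : ∀ j, t j ≤ 1)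
    (hgap : ∀ i j, i ≤ j → c i = 0 → c j < p) :
    ∃ r, t r = 1 ∧
      ∀ j, c j + (if j ≤ r then 1 else 0) = t j + if j < r then p else 0 := by
  have hexists : ∃ j, b j = 0 := ⟨N, hbN⟩
  obtain ⟨r, hr⟩ : ∃ r, Nat.find hexists = r + 1 :=
    Nat.exists_eq_succ_of_ne_zero fun h0 => by simp [Nat.find_eq_zero, hb_zero] at h0
  have hb_one : ∀ j, j ≤ r → b j = 1 := fun j hj => by
    have := Nat.find_min hexists (m := j) (by omega)
    have := (hb j).1
    omega
  have hb_succ : b (r + 1) = 0 := hr ▸ Nat.find_spec hexists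
  have hr_digit := hb r
  have := ht r
  rw [hb_succ, hb_one r le_rfl] at hr_digit
  -- A second carry would start at some `j > r` with `p ≤ c j`, but `c r = 0`.
  have hb_after : ∀ j, r < j → b j = 0 := fun j hj => by
    induction j, hj using Nat.le_induction with
    | base => exact hb_succ
    | succ j hj ih =>
      have hj_digit := (hb j).2
      have := hgap r j (by omega) (by omega)
      rw [ih] at hj_digit
      by_contra hne
      have := Nat.le_mul_of_pos_right p (Nat.pos_of_ne_zero hne)
      omega
  refine ⟨r, by omega, fun j => ?_⟩
  have hj_digit := (hb j).2
  rcases lt_trichotomy j r with hj | rfl | hj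
  · simpa [hj, hj.le, hb_one j hj.le, hb_one (j + 1) hj] using hj_digit
  · simpa using hr_digit.2
  · simpa [hj.not_gt, hj.not_ge, hb_after j hj, hb_after (j + 1) (by omega)] using hj_digit

theorem pred_mul_sum_Ico_pow_add {p s e : ℕ} (hp : 0 < p) (h : s ≤ e) :
    (p - 1) * ∑ i ∈ Finset.Ico s e, p ^ i + p ^ s = p ^ e := by
  obtain ⟨q, rfl⟩ := Nat.exists_eq_add_of_lt hp
  induction e, h using Nat.le_induction with
  | base => simp
  | succ e h ih =>
    rw [Finset.sum_Ico_succ_top h, pow_succ]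
    simp only [zero_add, Nat.add_sub_cancel] at ih ⊢
    linarith

theorem sum_range_indicator_mul_pow {p l m n N : ℕ} (hl : l < N) (hm : m < N) (hn : n < N) :
    ∑ j ∈ Finset.range N, ((if j = l then 1 else 0) + (if j = m then 1 else 0)
      + if j = n then 1 else 0) * p ^ j = p ^ l + p ^ m + p ^ n := by
  simp [add_mul, Finset.sum_add_distrib, hl, hm, hn]

/-! ### Multisets -/

theorem exists_add_pair_of_map_eq {α β : Type*} {f : α → β} {S : Multiset α} {M : Multiset β}
    {u v : β} (h : S.map f = M + {u, v}) :
    ∃ T x y, S = T + {x, y} ∧ T.map f = M ∧ f x = u ∧ f y = v := by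
  classical
  rw [Multiset.insert_eq_cons, Multiset.add_cons, ← Multiset.map_eq_cons] at h
  obtain ⟨x, hx, rfl, h⟩ := h
  rw [← Multiset.cons_zero, Multiset.add_cons, add_zero, ← Multiset.map_eq_cons] at h
  obtain ⟨y, hy, rfl, h⟩ := h
  refine ⟨_, x, y, ?_, h, rfl, rfl⟩
  rw [Multiset.insert_eq_cons, Multiset.add_cons, ← Multiset.cons_zero, Multiset.add_cons, add_zero,
    Multiset.cons_erase hy, Multiset.cons_erase hx]

section

variable {α : Type*} {j : ℕ} {r w w' : α} {A H M W : Multiset α}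

theorem cons_eq_replicate_succ_add [DecidableEq α] {x : α}
    (h : x ::ₘ M = Multiset.replicate (j + 1) r + W) :
    x = r ∧ M = Multiset.replicate j r + W ∨
      x ∈ W ∧ M = Multiset.replicate (j + 1) r + W.erase x := by
  have hM : M = (Multiset.replicate (j + 1) r + W).erase x := by rw [← h, Multiset.erase_cons_head]
  have hx : x ∈ Multiset.replicate (j + 1) r + W := h ▸ Multiset.mem_cons_self x M
  rcases Multiset.mem_add.1 hx with hx_rep | hx_W
  · obtain rfl := Multiset.eq_of_mem_replicate hx_rep
    exact .inl ⟨rfl, by simpa [Multiset.replicate_succ] using hM⟩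
  · exact .inr ⟨hx_W, by rw [hM, Multiset.erase_add_right_pos _ hx_W]⟩

theorem le_cons_of_add_eq_replicate_add (hH : H.Nodup) (h : A + H = Multiset.replicate j r + W) :
    H ≤ r ::ₘ W := by
  refine (Multiset.le_iff_subset hH).2 fun z hz => ?_
  have hz_mem : z ∈ Multiset.replicate j r + W := h ▸ Multiset.mem_add.2 (.inr hz)
  rcases Multiset.mem_add.1 hz_mem with hz_rep | hz_W
  · simp [Multiset.eq_of_mem_replicate hz_rep]
  · exact Multiset.mem_cons_of_mem hz_W

theorem add_ne_replicate (hH : H.Nodup) (hcard : H.card = 2) : A + H ≠ Multiset.replicate j r :=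
  fun h => by
    have hle := le_cons_of_add_eq_replicate_add (W := 0) hH (by simpa using h)
    have := Multiset.card_le_card hle
    simp [hcard] at this

theorem add_eq_replicate_add_singleton (hH : H.Nodup) (hcard : H.card = 2)
    (h : A + H = Multiset.replicate (j + 1) r + {w}) :
    A = Multiset.replicate j r ∧ H = {r, w} := by
  obtain rfl : H = {r, w} :=
    Multiset.eq_of_le_of_card_le (le_cons_of_add_eq_replicate_add hH h) (by simp [hcard])
  refine ⟨add_right_cancel (b := {r, w}) (h.trans ?_), rfl⟩
  simp [Multiset.replicate_succ]

theorem add_eq_replicate_add_pair (hH : H.Nodup) (hcard : H.card = 2)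
    (h : A + H = Multiset.replicate (j + 1) r + {w, w'}) :
    A = Multiset.replicate j r + {w'} ∧ H = {r, w} ∨
      A = Multiset.replicate j r + {w} ∧ H = {r, w'} ∨
      A = Multiset.replicate (j + 1) r ∧ H = {w, w'} := by
  have hmem : H ∈ (r ::ₘ {w, w'}).powersetCard 2 :=
    Multiset.mem_powersetCard.2 ⟨le_cons_of_add_eq_replicate_add hH h, hcard⟩
  have hcases : H = {r, w'} ∨ H = {w, w'} ∨ H = {r, w} := by
    simpa [-Multiset.mem_powersetCard, Multiset.powersetCard_one] using hmem
  rcases hcases with rfl | rfl | rfl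
  · refine .inr (.inl ⟨add_right_cancel (b := {r, w'}) (h.trans ?_), rfl⟩)
    simp only [Multiset.replicate_succ, Multiset.insert_eq_cons, ← Multiset.singleton_add]
    abel
  · exact .inr (.inr ⟨add_right_cancel h, rfl⟩)
  · refine .inl ⟨add_right_cancel (b := {r, w}) (h.trans ?_), rfl⟩
    simp only [Multiset.replicate_succ, Multiset.insert_eq_cons, ← Multiset.singleton_add]
    abel

end

/-! ### Generators as intervals -/

namespace MayGen

/-- The first exponent `s` of the generator `g`, whose degree at the prime `p` is
`2 (p - 1) (p ^ s + ⋯ + p ^ (e - 1))`, plus `1` if `g = a k`. -/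
def start : MayGen → ℕ
  | a _ => 0
  | h _ j => j
  | b _ j => j + 1

/-- The exponent `e` just after the last one of a generator; see `MayGen.start`. -/
def finish : MayGen → ℕ
  | a k => k
  | h i j => i + j
  | b i j => i + (j + 1)

/-- Whether a generator is one of the `a k`, which are those of odd degree. -/
def isA : MayGen → Bool
  | a _ => true
  | h _ _ => false
  | b _ _ => false

/-- Whether a generator is one of the `b i j`, which are those of filtration `2`. -/
def isB : MayGen → Bool
  | a _ => false
  | h _ _ => false
  | b _ _ => true

theorem start_le_finish (g : MayGen) : g.start ≤ g.finish := by
  cases g <;> simp [start, finish]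

theorem deg_add_two_mul_pow_start {p : ℕ} (hp : 0 < p) (g : MayGen) :
    g.deg p + 2 * p ^ g.start = (if g.isA then 1 else 0) + 2 * p ^ g.finish := by
  cases g with
  | a k =>
    have := Nat.one_le_pow k p hp
    simp only [deg, start, finish, isA, pow_zero, if_true]
    omega
  | h i j | b i j =>
    obtain ⟨x, hx⟩ := Nat.exists_eq_add_of_le (Nat.one_le_pow i p hp)
    simp only [deg, start, finish, isA, pow_add _ i, hx, Nat.add_sub_cancel_left,
      Bool.false_eq_true, if_false]
    ring

theorem totalDeg_add_two_mul_sum_pow_start {p : ℕ} (hp : 0 < p) (S : Multiset MayGen) :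
    totalDeg p S + 2 * ((S.map start).map (p ^ ·)).sum
      = S.countP (isA ·) + 2 * ((S.map finish).map (p ^ ·)).sum := by
  induction S using Multiset.induction with
  | empty => simp [totalDeg]
  | cons g S ih =>
    have hg := deg_add_two_mul_pow_start hp g
    simp only [totalDeg, Multiset.map_cons, Multiset.sum_cons, Multiset.countP_cons] at ih ⊢
    linarith

theorem totalFilt_eq_card_add (S : Multiset MayGen) :
    totalFilt S = S.card + S.countP (isB ·) := by
  unfold totalFilt
  induction S using Multiset.induction with
  | empty => simp
  | cons g S ih =>
    rw [Multiset.map_cons, Multiset.sum_cons, ih, Multiset.countP_cons, Multiset.card_cons]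
    have hg : g.filt = 1 + if g.isB then 1 else 0 := by cases g <;> rfl
    omega

/-- The number `c j` of generators of a monomial whose degree involves `p ^ j`: the degree of the
monomial is `2 (p - 1) ∑ c j p ^ j`, plus `1` for every `a k`. -/
def coverage (S : Multiset MayGen) (j : ℕ) : ℕ :=
  S.countP fun g => g.start ≤ j ∧ j < g.finish

theorem coverage_le_card (S : Multiset MayGen) (j : ℕ) : coverage S j ≤ S.card :=
  Multiset.countP_le_card _ S

theorem coverage_eq_zero {S : Multiset MayGen} {N j : ℕ} (hN : ∀ g ∈ S, g.finish ≤ N) (hj : N ≤ j) :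
    coverage S j = 0 :=
  Multiset.countP_eq_zero.2 fun g hg hcov => by
    have := hN g hg
    omega

theorem totalDeg_eq_countP_isA_add {p N : ℕ} (hp : 0 < p) {S : Multiset MayGen}
    (hN : ∀ g ∈ S, g.finish ≤ N) :
    totalDeg p S
      = S.countP (isA ·) + 2 * (p - 1) * ∑ j ∈ Finset.range N, coverage S j * p ^ j := by
  induction S using Multiset.induction with
  | empty => simp [totalDeg, coverage]
  | cons g S ih =>
    have hgN := hN g (Multiset.mem_cons_self g S)
    have hgeom := pred_mul_sum_Ico_pow_add hp (start_le_finish g)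
    have hdeg := deg_add_two_mul_pow_start hp g
    have hIco : ∑ j ∈ Finset.range N, (if g.start ≤ j ∧ j < g.finish then 1 else 0) * p ^ j
        = ∑ j ∈ Finset.Ico g.start g.finish, p ^ j := by
      simp only [ite_mul, one_mul, zero_mul, ← Finset.sum_filter]
      congr 1
      ext j
      simp only [Finset.mem_filter, Finset.mem_range, Finset.mem_Ico]
      omega
    have hS := ih fun x hx => hN x (Multiset.mem_cons_of_mem hx)
    simp only [totalDeg, coverage, Multiset.map_cons, Multiset.sum_cons, Multiset.countP_cons,
      add_mul, Finset.sum_add_distrib, hIco] at hS ⊢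
    linarith

-- A generator covers an interval, so one covering both `0` and `j` would cover `i`.
theorem coverage_zero_add_le_card {S : Multiset MayGen} {i j : ℕ} (hij : i ≤ j)
    (hi : coverage S i = 0) : coverage S 0 + coverage S j ≤ S.card := by
  have hnot := Multiset.countP_eq_zero.1 hi
  clear hi
  induction S using Multiset.induction with
  | empty => simp [coverage]
  | cons g S ih =>
    have hg := hnot g (Multiset.mem_cons_self g S)
    have hS := ih fun x hx => hnot x (Multiset.mem_cons_of_mem hx)
    simp only [coverage, Multiset.countP_cons, Multiset.card_cons] at hS ⊢
    split_ifs <;> omega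

theorem count_zero_map_start (S : Multiset MayGen) :
    (S.map start).count 0 = coverage S 0 + (S.map finish).count 0 := by
  induction S using Multiset.induction with
  | empty => simp [coverage]
  | cons g S ih =>
    have := start_le_finish g
    simp only [coverage, Multiset.map_cons, Multiset.count_cons, Multiset.countP_cons] at ih ⊢
    split_ifs <;> omega

theorem count_succ_map_start_add (S : Multiset MayGen) (j : ℕ) :
    (S.map start).count (j + 1) + coverage S j
      = coverage S (j + 1) + (S.map finish).count (j + 1) := by
  induction S using Multiset.induction with
  | empty => simp [coverage]
  | cons g S ih =>
    have := start_le_finish g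
    simp only [coverage, Multiset.map_cons, Multiset.count_cons, Multiset.countP_cons] at ih ⊢
    split_ifs <;> omega

theorem map_start_of_coverage {S : Multiset MayGen} {k r u v : ℕ}
    (hcov : ∀ j, coverage S j
      = (if j < r then k else 0) + (if j = u then 1 else 0) + if j = v then 1 else 0)
    (hcard : S.card ≤ k + 2) (hr : 0 < r) (huv : u + 1 < v) (hur : u ≠ r)
    (hvr : v ≠ r) :
    S.map start = Multiset.replicate k 0 + {u, v} := by
  refine (Multiset.eq_of_le_of_card_le (Multiset.le_iff_count.2 fun j => ?_) ?_).symm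
  · simp only [Multiset.count_add, Multiset.count_replicate, Multiset.insert_eq_cons,
      Multiset.count_cons, Multiset.count_singleton]
    cases j with
    | zero => have := count_zero_map_start S; grind
    | succ j => have := count_succ_map_start_add S j; grind
  · simpa using hcard

theorem map_finish_of_coverage {S : Multiset MayGen} {k r u v : ℕ}
    (hcov : ∀ j, coverage S j
      = (if j < r then k else 0) + (if j = u then 1 else 0) + if j = v then 1 else 0)
    (hstart : S.map start = Multiset.replicate k 0 + {u, v}) :
    S.map finish = Multiset.replicate k r + {u + 1, v + 1} := by
  refine Multiset.ext.2 fun j => ?_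
  have hzero := count_zero_map_start S
  have hsucc := count_succ_map_start_add S
  simp only [hstart, hcov, Multiset.count_add, Multiset.count_replicate, Multiset.insert_eq_cons,
    Multiset.count_cons, Multiset.count_singleton] at hzero hsucc ⊢
  cases j with
  | zero => clear hsucc; grind
  | succ j => have := hsucc j; clear hsucc hzero; grind

theorem exists_finish_le (S : Multiset MayGen) (n : ℕ) : ∃ N, n ≤ N ∧ ∀ g ∈ S, g.finish ≤ N :=
  ⟨n + (S.map finish).sum, Nat.le_add_right _ _, fun _ hg =>
    (Multiset.le_sum_of_mem (Multiset.mem_map_of_mem finish hg)).trans (Nat.le_add_left _ _)⟩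

theorem countP_isA_and_sum_coverage {p M K N : ℕ} {S : Multiset MayGen}
    (hK : K < 2 * (p - 1)) (hcard : S.card < 2 * (p - 1)) (hN : ∀ g ∈ S, g.finish ≤ N)
    (hdeg : totalDeg p S = 2 * (p - 1) * M + K) :
    S.countP (isA ·) = K ∧ ∑ j ∈ Finset.range N, coverage S j * p ^ j = M := by
  have hA := (Multiset.countP_le_card (isA ·) S).trans_lt hcard
  rw [totalDeg_eq_countP_isA_add (by omega) hN] at hdeg
  have hmod : S.countP (isA ·) = K := by
    simpa [Nat.add_mul_mod_self_left, Nat.mul_add_mod, Nat.mod_eq_of_lt hA, Nat.mod_eq_of_lt hK]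
      using congrArg (· % (2 * (p - 1))) hdeg
  exact ⟨hmod, Nat.eq_of_mul_eq_mul_left (by omega : 0 < 2 * (p - 1)) (by omega)⟩

theorem exists_coverage_eq {p l m n N : ℕ} {S : Multiset MayGen} (hp : 3 ≤ p)
    (hl : 0 < l) (hlm : l < m) (hmn : m < n) (hnN : n < N) (hcard : S.card ≤ p + 1)
    (hN : ∀ g ∈ S, g.finish ≤ N)
    (h : ∑ j ∈ Finset.range N, coverage S j * p ^ j + 1 = p ^ l + p ^ m + p ^ n) :
    ∃ r, (r = l ∨ r = m ∨ r = n) ∧ ∀ j, coverage S j + (if j ≤ r then 1 else 0)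
      = ((if j = l then 1 else 0) + (if j = m then 1 else 0) + if j = n then 1 else 0)
        + if j < r then p else 0 := by
  have hle j : coverage S j ≤ p + 1 := (coverage_le_card S j).trans hcard
  let t j := (if j = l then 1 else 0) + (if j = m then 1 else 0) + if j = n then 1 else 0
  have ht j : t j ≤ 1 := by grind
  obtain ⟨b, hb_zero, hbN, hb⟩ := exists_carry (p := p) (c := coverage S) (t := t)
    (fun j => by have := hle j; omega) (fun j => (ht j).trans_lt (by omega))
    (fun j => coverage_eq_zero hN) (fun j hj => by grind) le_rfl
    (by rw [h, sum_range_indicator_mul_pow (by omega) (by omega) hnN])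
  have hzero : coverage S 0 + 1 = p := by
    obtain ⟨-, hcarry⟩ := hb 0
    have hb_one : b (0 + 1) ≤ 1 := (hb 1).1
    have ht_zero : t 0 = 0 := by grind
    rw [hb_zero, ht_zero] at hcarry
    interval_cases b (0 + 1) <;> omega
  have hgap i j (hij : i ≤ j) (hi : coverage S i = 0) : coverage S j < p := by
    have := coverage_zero_add_le_card hij hi
    omega
  obtain ⟨r, hr, hcov⟩ := exists_last_carry hb_zero hbN hb ht hgap
  exact ⟨r, by grind, hcov⟩

/-! ### Monomials with prescribed ends -/

/-- The monomial with factors `a x` for `x` in `A` and `h x 0` for `x` in `H`: these are the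
generators which start at `0` and are not a `b i j`, listed by their finishes. -/
def ofFinishes (A H : Multiset ℕ) : Multiset MayGen :=
  A.map a + H.map fun x => h x 0

theorem map_start_ofFinishes (A H : Multiset ℕ) :
    (ofFinishes A H).map start = Multiset.replicate (A.card + H.card) 0 := by
  simp [ofFinishes, Function.comp_def, start, Multiset.replicate_add]

theorem map_finish_ofFinishes (A H : Multiset ℕ) : (ofFinishes A H).map finish = A + H := by
  simp [ofFinishes, Function.comp_def, finish]

theorem countP_isA_ofFinishes (A H : Multiset ℕ) : (ofFinishes A H).countP (isA ·) = A.card := by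
  rw [ofFinishes, Multiset.countP_add, Multiset.countP_map, Multiset.countP_map]
  simp [isA]

theorem countP_isB_ofFinishes (A H : Multiset ℕ) : (ofFinishes A H).countP (isB ·) = 0 := by
  rw [ofFinishes, Multiset.countP_add, Multiset.countP_map, Multiset.countP_map]
  simp [isB]

theorem count_h_ofFinishes (A H : Multiset ℕ) (i j : ℕ) :
    (ofFinishes A H).count (h i j) = if j = 0 then H.count i else 0 := by
  unfold ofFinishes
  induction H using Multiset.induction with
  | empty => simp
  | cons x H ih =>
    simp only [Multiset.map_cons, Multiset.add_cons, Multiset.count_cons, ih, h.injEq]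
    split_ifs <;> omega

theorem exists_ofFinishes {T : Multiset MayGen} (hstart : ∀ g ∈ T, g.start = 0)
    (hB : ∀ g ∈ T, ¬ g.isB) : ∃ A H, T = ofFinishes A H := by
  induction T using Multiset.induction with
  | empty => exact ⟨0, 0, rfl⟩
  | cons g T ih =>
    obtain ⟨A, H, rfl⟩ := ih (fun x hx => hstart x (Multiset.mem_cons_of_mem hx))
      fun x hx => hB x (Multiset.mem_cons_of_mem hx)
    have hg := hstart g (Multiset.mem_cons_self _ _)
    cases g with
    | a x => exact ⟨x ::ₘ A, H, by simp [ofFinishes]⟩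
    | h x j =>
      obtain rfl : j = 0 := hg
      exact ⟨A, x ::ₘ H, by simp [ofFinishes]⟩
    | b i j => exact absurd rfl (hB _ (Multiset.mem_cons_self _ _))

theorem start_lt_finish_and_eq_h {g : MayGen} (hg : g.IsValid) (hB : ¬ g.isB)
    (hstart : 0 < g.start) : g.start < g.finish ∧ g = h (g.finish - g.start) g.start := by
  cases g with
  | a k => exact absurd hstart (lt_irrefl 0)
  | h i j => exact ⟨Nat.lt_add_of_pos_left hg, congrArg (h · j) (Nat.add_sub_cancel i j).symm⟩
  | b i j => exact absurd rfl hB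

/-- The shape of the monomials which, at the prime `k + 4`, have the required degree and
filtration with last carry at `r`: besides generators starting at `0` there are two others,
starting at `u` and `v`, and all finishes but two are `r`. -/
def HasLastCarry (k r u v : ℕ) (S : Multiset MayGen) : Prop :=
  ∃ A H x y, S = ofFinishes A H + {h (x - u) u, h (y - v) v} ∧ H.Nodup ∧ H.card = 2 ∧ u < x ∧
    v < y ∧ A + H + {x, y} = Multiset.replicate (k + 3) r + {u + 1, v + 1}

section

variable {k r u v : ℕ} {S : Multiset MayGen}

theorem admissible_iff_nodup {A H : Multiset ℕ} {i j : ℕ} (hu : 0 < u) (huv : u ≠ v) (hv : 0 < v) :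
    Admissible (ofFinishes A H + {h i u, h j v}) ↔ H.Nodup := by
  simp only [Admissible, Multiset.nodup_iff_count_le_one, Multiset.count_add, count_h_ofFinishes,
    Multiset.insert_eq_cons, Multiset.count_cons, Multiset.count_singleton, h.injEq]
  constructor
  · intro hS x
    have := hS x 0
    grind
  · grind

theorem hasLastCarry_of_map (hvalid : ∀ g ∈ S, g.IsValid) (hadm : Admissible S)
    (hB : S.countP (isB ·) = 0) (hA : S.countP (isA ·) = k + 1) (hu : 0 < u) (huv : u ≠ v)
    (hv : 0 < v) (hstart : S.map start = Multiset.replicate (k + 3) 0 + {u, v})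
    (hfinish : S.map finish = Multiset.replicate (k + 3) r + {u + 1, v + 1}) :
    HasLastCarry k r u v S := by
  rw [Multiset.countP_eq_zero] at hB
  obtain ⟨T, g, g', rfl, hT, rfl, rfl⟩ := exists_add_pair_of_map_eq hstart
  obtain ⟨A, H, rfl⟩ := exists_ofFinishes
    (fun x hx => Multiset.eq_of_mem_replicate (hT ▸ Multiset.mem_map_of_mem start hx))
    fun x hx => hB x (Multiset.mem_add.2 (.inl hx))
  have hmem : g ∈ ofFinishes A H + {g, g'} := by simp
  have hmem' : g' ∈ ofFinishes A H + {g, g'} := by simp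
  obtain ⟨hlt, hg⟩ := start_lt_finish_and_eq_h (hvalid g hmem) (hB g hmem) hu
  obtain ⟨hlt', hg'⟩ := start_lt_finish_and_eq_h (hvalid g' hmem') (hB g' hmem') hv
  rw [Multiset.map_add, map_finish_ofFinishes] at hfinish
  refine ⟨A, H, g.finish, g'.finish, by rw [← hg, ← hg'], ?_, ?_, hlt, hlt', by simpa using hfinish⟩
  · rw [hg, hg'] at hadm
    exact (admissible_iff_nodup hu huv hv).1 hadm
  · rw [hg, hg', Multiset.countP_add, countP_isA_ofFinishes,
      Multiset.countP_eq_zero.2 (by simp [isA])] at hA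
    have hAH : A.card + H.card = k + 3 := by
      simpa [map_start_ofFinishes] using congrArg Multiset.card hT
    omega

theorem HasLastCarry.isValid (hS : HasLastCarry k r u v S) (hr : 0 < r) : ∀ g ∈ S, g.IsValid := by
  obtain ⟨A, H, x, y, rfl, -, -, hx, hy, hfinish⟩ := hS
  have hH : ∀ z ∈ H, 1 ≤ z := fun z hz => by
    have hz_mem : z ∈ Multiset.replicate (k + 3) r + {u + 1, v + 1} := by
      rw [← hfinish]
      exact Multiset.mem_add.2 (.inl (Multiset.mem_add.2 (.inr hz)))
    simp only [Multiset.mem_add, Multiset.insert_eq_cons, Multiset.mem_cons,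
      Multiset.mem_singleton] at hz_mem
    rcases hz_mem with hz_rep | rfl | rfl
    · exact (Multiset.eq_of_mem_replicate hz_rep).symm ▸ hr
    all_goals omega
  intro g hg
  simp only [ofFinishes, Multiset.mem_add, Multiset.mem_map, Multiset.insert_eq_cons,
    Multiset.mem_cons, Multiset.mem_singleton] at hg
  rcases hg with (⟨z, -, rfl⟩ | ⟨z, hz, rfl⟩) | rfl | rfl
  · trivial
  · exact hH z hz
  · exact Nat.sub_pos_of_lt hx
  · exact Nat.sub_pos_of_lt hy

theorem HasLastCarry.admissible (hS : HasLastCarry k r u v S)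
    (hu : 0 < u) (huv : u ≠ v) (hv : 0 < v) : Admissible S := by
  obtain ⟨A, H, x, y, rfl, hH, -⟩ := hS
  exact (admissible_iff_nodup hu huv hv).2 hH

theorem HasLastCarry.map_finish (hS : HasLastCarry k r u v S) :
    S.map finish = Multiset.replicate (k + 3) r + {u + 1, v + 1} := by
  obtain ⟨A, H, x, y, rfl, -, -, hx, hy, hfinish⟩ := hS
  rw [← hfinish, Multiset.map_add, map_finish_ofFinishes]
  simp only [Multiset.insert_eq_cons, Multiset.map_cons, Multiset.map_singleton, finish,
    Nat.sub_add_cancel hx.le, Nat.sub_add_cancel hy.le]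

theorem HasLastCarry.countP_isA (hS : HasLastCarry k r u v S) : S.countP (isA ·) = k + 1 := by
  obtain ⟨A, H, x, y, rfl, -, hH, -, -, hfinish⟩ := hS
  have hcard := congrArg Multiset.card hfinish
  simp only [Multiset.card_add, Multiset.insert_eq_cons, Multiset.card_cons,
    Multiset.card_singleton, Multiset.card_replicate, hH] at hcard
  rw [Multiset.countP_add, countP_isA_ofFinishes, Multiset.countP_eq_zero.2 (by simp [isA])]
  omega

theorem HasLastCarry.countP_isB (hS : HasLastCarry k r u v S) : S.countP (isB ·) = 0 := by
  obtain ⟨A, H, x, y, rfl, -⟩ := hS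
  rw [Multiset.countP_add, countP_isB_ofFinishes, Multiset.countP_eq_zero.2 (by simp [isB])]

theorem HasLastCarry.totalFilt_eq (hS : HasLastCarry k r u v S) : totalFilt S = k + 5 := by
  have hcard := congrArg Multiset.card hS.map_finish
  rw [totalFilt_eq_card_add, hS.countP_isB]
  simpa using hcard

theorem HasLastCarry.map_start (hS : HasLastCarry k r u v S) :
    S.map start = Multiset.replicate (k + 3) 0 + {u, v} := by
  have hcard : S.card = k + 5 := by simpa using congrArg Multiset.card hS.map_finish
  obtain ⟨A, H, x, y, rfl, -⟩ := hS
  obtain hAH : A.card + H.card = k + 3 := by simpa [ofFinishes] using hcard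
  simp only [Multiset.map_add, map_start_ofFinishes, hAH, Multiset.insert_eq_cons,
    Multiset.map_cons, Multiset.map_singleton, start]

theorem HasLastCarry.totalDeg_eq (hS : HasLastCarry k r u v S) :
    totalDeg (k + 4) S
      = 2 * (k + 3) * ((k + 4) ^ r + (k + 4) ^ u + (k + 4) ^ v - 1) + (k + 1) := by
  have hdeg := totalDeg_add_two_mul_sum_pow_start (p := k + 4) (by omega) S
  simp only [hS.map_start, hS.map_finish, hS.countP_isA, Multiset.map_add, Multiset.map_replicate,
    Multiset.sum_add, Multiset.sum_replicate, smul_eq_mul, Multiset.insert_eq_cons,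
    Multiset.map_cons, Multiset.map_singleton, Multiset.sum_cons, Multiset.sum_singleton, pow_zero,
    pow_succ] at hdeg
  obtain ⟨x, hx⟩ := Nat.exists_eq_add_of_le (Nat.one_le_pow r (k + 4) (by omega))
  rw [hx] at hdeg ⊢
  rw [add_assoc, add_assoc, Nat.add_sub_cancel_left]
  linarith

end

theorem hasLastCarry_of_coverage {k r u v : ℕ} {S : Multiset MayGen} (hvalid : ∀ g ∈ S, g.IsValid)
    (hadm : Admissible S) (hfilt : totalFilt S = k + 5) (hA : S.countP (isA ·) = k + 1)
    (hr : 0 < r) (hu : 0 < u) (huv : u + 1 < v) (hur : u ≠ r) (hvr : v ≠ r)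
    (hcov : ∀ j, coverage S j
      = (if j < r then k + 3 else 0) + (if j = u then 1 else 0) + if j = v then 1 else 0) :
    HasLastCarry k r u v S := by
  rw [totalFilt_eq_card_add] at hfilt
  have hstart := map_start_of_coverage hcov (by omega) hr huv hur hvr
  have hcard : S.card = k + 5 := by simpa using congrArg Multiset.card hstart
  exact hasLastCarry_of_map hvalid hadm (by omega) hA hu (by omega) (by omega) hstart
    (map_finish_of_coverage hcov hstart)

theorem hasLastCarry_of_totalDeg {k l m n : ℕ} {S : Multiset MayGen} (hl : 0 < l) (hlm : l + 1 < m)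
    (hmn : m + 1 < n) (hvalid : ∀ g ∈ S, g.IsValid) (hadm : Admissible S)
    (hfilt : totalFilt S = k + 5)
    (hdeg : totalDeg (k + 4) S
      = 2 * (k + 3) * ((k + 4) ^ n + (k + 4) ^ m + (k + 4) ^ l - 1) + (k + 1)) :
    HasLastCarry k l m n S ∨ HasLastCarry k m l n S ∨ HasLastCarry k n l m S := by
  have hcard : S.card ≤ k + 5 := hfilt ▸ totalFilt_eq_card_add S ▸ Nat.le_add_right _ _
  obtain ⟨N, hnN, hN⟩ := exists_finish_le S (n + 1)
  obtain ⟨hA, hsum⟩ :=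
    countP_isA_and_sum_coverage (p := k + 4) (by omega) (by omega) hN hdeg
  have hpos := Nat.one_le_pow n (k + 4) (by omega)
  obtain ⟨r, hr, hcov⟩ :=
    exists_coverage_eq (p := k + 4) (by omega) hl (by omega : l < m) (by omega : m < n) hnN hcard hN
      (by omega)
  have hcases {u v : ℕ} := hasLastCarry_of_coverage (u := u) (v := v) hvalid hadm hfilt hA
    (by omega : 0 < r)
  rcases hr with rfl | rfl | rfl
  · exact .inl (hcases (by omega) hmn (by omega) (by omega) fun j => by have := hcov j; grind)
  · exact .inr (.inl (hcases hl (by omega) (by omega) (by omega) fun j => by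
      have := hcov j; grind))
  · exact .inr (.inr (hcases hl hlm (by omega) (by omega) fun j => by have := hcov j; grind))

section

variable {k r u v : ℕ} {S : Multiset MayGen}

theorem finish_cases {x y : ℕ} {M : Multiset ℕ} (hx : u < x) (hy : v < y) (huv : u < v)
    (h : M + {x, y} = Multiset.replicate (k + 3) r + {u + 1, v + 1}) :
    x = u + 1 ∧ y = v + 1 ∧ M = Multiset.replicate (k + 3) r ∨
      x = r ∧ y = v + 1 ∧ M = Multiset.replicate (k + 2) r + {u + 1} ∨
      x = u + 1 ∧ y = r ∧ M = Multiset.replicate (k + 2) r + {v + 1} ∨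
      x = v + 1 ∧ y = r ∧ M = Multiset.replicate (k + 2) r + {u + 1} ∨
      x = r ∧ y = r ∧ M = Multiset.replicate (k + 1) r + {u + 1, v + 1} := by
  have hyx : y ::ₘ x ::ₘ M = Multiset.replicate (k + 3) r + {u + 1, v + 1} := by
    rw [← h, add_comm, Multiset.insert_eq_cons, Multiset.cons_add, Multiset.singleton_add,
      Multiset.cons_swap]
  have herase : ({u + 1, v + 1} : Multiset ℕ).erase (v + 1) = {u + 1} := by
    rw [Multiset.pair_comm, Multiset.insert_eq_cons, Multiset.erase_cons_head]
  have herase' : ({u + 1, v + 1} : Multiset ℕ).erase (u + 1) = {v + 1} :=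
    Multiset.erase_cons_head _ _
  obtain ⟨hyr, hxM⟩ | ⟨hy_mem, hxM⟩ := cons_eq_replicate_succ_add hyx
  · obtain ⟨hxr, hM⟩ | ⟨hx_mem, hM⟩ := cons_eq_replicate_succ_add hxM
    · exact .inr (.inr (.inr (.inr ⟨hxr, hyr, hM⟩)))
    · obtain rfl | rfl : x = u + 1 ∨ x = v + 1 := by simpa using hx_mem
      · exact .inr (.inr (.inl ⟨rfl, hyr, herase' ▸ hM⟩))
      · exact .inr (.inr (.inr (.inl ⟨rfl, hyr, herase ▸ hM⟩)))
  · obtain rfl | rfl : y = u + 1 ∨ y = v + 1 := by simpa using hy_mem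
    · omega
    · rw [herase] at hxM
      obtain ⟨hxr, hM⟩ | ⟨hx_mem, hM⟩ := cons_eq_replicate_succ_add hxM
      · exact .inr (.inl ⟨hxr, rfl, hM⟩)
      · obtain rfl := Multiset.mem_singleton.1 hx_mem
        exact .inl ⟨rfl, rfl, by simpa using hM⟩

theorem hasLastCarry_iff (huv : u < v) (hur : r ≠ u + 1) (hvr : r ≠ v + 1) :
    HasLastCarry k r u v S ↔
      u < r ∧ S = ofFinishes (Multiset.replicate (k + 1) r) {r, u + 1}
        + {h (r - u) u, h (v + 1 - v) v} ∨
      v < r ∧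
        (S = ofFinishes (Multiset.replicate (k + 1) r) {r, v + 1}
            + {h (u + 1 - u) u, h (r - v) v} ∨
          S = ofFinishes (Multiset.replicate k r + {v + 1}) {r, u + 1}
            + {h (r - u) u, h (r - v) v} ∨
          S = ofFinishes (Multiset.replicate (k + 1) r) {r, u + 1}
            + {h (v + 1 - u) u, h (r - v) v} ∨
          S = ofFinishes (Multiset.replicate (k + 1) r) {u + 1, v + 1}
            + {h (r - u) u, h (r - v) v} ∨
          S = ofFinishes (Multiset.replicate k r + {u + 1}) {r, v + 1}
            + {h (r - u) u, h (r - v) v}) := by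
  constructor
  · rintro ⟨A, H, x, y, rfl, hH, hcard, hx, hy, hfinish⟩
    rcases finish_cases hx hy huv hfinish with
      ⟨rfl, rfl, hAH⟩ | ⟨rfl, rfl, hAH⟩ | ⟨rfl, rfl, hAH⟩ | ⟨rfl, rfl, hAH⟩ | ⟨rfl, rfl, hAH⟩
    · exact absurd hAH (add_ne_replicate hH hcard)
    · obtain ⟨rfl, rfl⟩ := add_eq_replicate_add_singleton hH hcard hAH
      exact .inl ⟨hx, rfl⟩
    · obtain ⟨rfl, rfl⟩ := add_eq_replicate_add_singleton hH hcard hAH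
      exact .inr ⟨hy, .inl rfl⟩
    · obtain ⟨rfl, rfl⟩ := add_eq_replicate_add_singleton hH hcard hAH
      exact .inr ⟨hy, .inr (.inr (.inl rfl))⟩
    · obtain ⟨rfl, rfl⟩ | ⟨rfl, rfl⟩ | ⟨rfl, rfl⟩ := add_eq_replicate_add_pair hH hcard hAH
      · exact .inr ⟨hy, .inr (.inl rfl)⟩
      · exact .inr ⟨hy, .inr (.inr (.inr (.inr rfl)))⟩
      · exact .inr ⟨hy, .inr (.inr (.inr (.inl rfl)))⟩
  · have hne := huv.ne
    rintro (⟨hr, rfl⟩ | ⟨hr, rfl | rfl | rfl | rfl | rfl⟩)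
    all_goals
      refine ⟨_, _, _, _, rfl, by simpa, rfl, by omega, by omega, ?_⟩
      simp only [Multiset.replicate_succ, Multiset.insert_eq_cons, ← Multiset.singleton_add]
      abel

theorem not_hasLastCarry_of_lt (hru : r < u) (huv : u < v) : ¬ HasLastCarry k r u v S := by
  rw [hasLastCarry_iff huv (by omega) (by omega)]
  omega

theorem hasLastCarry_iff_of_lt_of_lt (hur : u + 1 < r) (hrv : r < v) :
    HasLastCarry k r u v S ↔
      S = Multiset.replicate (k + 1) (a r) + {h (u + 1) 0, h r 0, h (r - u) u, h 1 v} := by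
  rw [hasLastCarry_iff (by omega) hur.ne' (by omega), or_iff_left (by omega),
    and_iff_right (by omega)]
  simp only [ofFinishes, Multiset.map_add, Multiset.map_replicate, Multiset.insert_eq_cons,
    Multiset.map_singleton, ← Multiset.singleton_add, Nat.add_sub_cancel_left]
  refine Eq.congr_right ?_
  abel

theorem hasLastCarry_iff_of_lt (huv : u < v) (hvr : v + 1 < r) :
    HasLastCarry k r u v S ↔
      S = Multiset.replicate (k + 1) (a r) + {h (u + 1) 0, h 1 v, h (r - u) u, h r 0} ∨
      S = Multiset.replicate (k + 1) (a r) + {h 1 u, h (v + 1) 0, h (r - v) v, h r 0} ∨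
      S = {a (v + 1)} + Multiset.replicate k (a r)
        + {h (u + 1) 0, h (r - v) v, h (r - u) u, h r 0} ∨
      S = Multiset.replicate (k + 1) (a r)
        + {h (u + 1) 0, h (v + 1 - u) u, h (r - v) v, h r 0} ∨
      S = Multiset.replicate (k + 1) (a r)
        + {h (u + 1) 0, h (v + 1) 0, h (r - v) v, h (r - u) u} ∨
      S = {a (u + 1)} + Multiset.replicate k (a r)
        + {h (v + 1) 0, h (r - v) v, h (r - u) u, h r 0} := by
  rw [hasLastCarry_iff huv (by omega) hvr.ne', and_iff_right (by omega), and_iff_right (by omega)]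
  simp only [ofFinishes, Multiset.map_add, Multiset.map_replicate, Multiset.insert_eq_cons,
    Multiset.map_singleton, ← Multiset.singleton_add, Nat.add_sub_cancel_left]
  refine or_congr ?_ (or_congr ?_ (or_congr ?_ (or_congr ?_ (or_congr ?_ ?_))))
  all_goals
    refine Eq.congr_right ?_
    abel

end

theorem admissible_and_totals_iff_hasLastCarry {k l m n : ℕ} {S : Multiset MayGen} (hl : 0 < l)
    (hlm : l + 1 < m) (hmn : m + 1 < n) :
    ((∀ g ∈ S, g.IsValid) ∧ Admissible S ∧ totalFilt S = k + 5 ∧ totalDeg (k + 4) S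
        = 2 * (k + 3) * ((k + 4) ^ n + (k + 4) ^ m + (k + 4) ^ l - 1) + (k + 1)) ↔
      HasLastCarry k l m n S ∨ HasLastCarry k m l n S ∨ HasLastCarry k n l m S := by
  constructor
  · rintro ⟨hvalid, hadm, hfilt, hdeg⟩
    exact hasLastCarry_of_totalDeg hl hlm hmn hvalid hadm hfilt hdeg
  · rintro (hS | hS | hS)
    all_goals
      refine ⟨hS.isValid (by omega), hS.admissible (by omega) (by omega) (by omega),
        hS.totalFilt_eq, hS.totalDeg_eq.trans ?_⟩
      congr 3
      ring

end MayGen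

theorem stmt8_general (p : ℕ) (hp : 4 ≤ p) (l m n : ℕ) (hl : 0 < l) (hlm : l + 2 ≤ m)
    (hmn : m + 2 ≤ n) (S : Multiset MayGen) :
    ((∀ x ∈ S, x.IsValid) ∧ Admissible S ∧ totalFilt S = p + 1 ∧
        totalDeg p S = 2 * (p - 1) * (p ^ n + p ^ m + p ^ l - 1) + (p - 3)) ↔
      (S = Multiset.replicate (p - 3) (MayGen.a n) +
            {MayGen.h (l + 1) 0, MayGen.h 1 m, MayGen.h (n - l) l, MayGen.h n 0} ∨
       S = Multiset.replicate (p - 3) (MayGen.a n) +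
            {MayGen.h 1 l, MayGen.h (m + 1) 0, MayGen.h (n - m) m, MayGen.h n 0} ∨
       S = {MayGen.a (m + 1)} + Multiset.replicate (p - 4) (MayGen.a n) +
            {MayGen.h (l + 1) 0, MayGen.h (n - m) m, MayGen.h (n - l) l, MayGen.h n 0} ∨
       S = Multiset.replicate (p - 3) (MayGen.a n) +
            {MayGen.h (l + 1) 0, MayGen.h (m + 1 - l) l, MayGen.h (n - m) m, MayGen.h n 0} ∨
       S = Multiset.replicate (p - 3) (MayGen.a n) +
            {MayGen.h (l + 1) 0, MayGen.h (m + 1) 0, MayGen.h (n - m) m, MayGen.h (n - l) l} ∨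
       S = {MayGen.a (l + 1)} + Multiset.replicate (p - 4) (MayGen.a n) +
            {MayGen.h (m + 1) 0, MayGen.h (n - m) m, MayGen.h (n - l) l, MayGen.h n 0} ∨
       S = Multiset.replicate (p - 3) (MayGen.a m) +
            {MayGen.h (l + 1) 0, MayGen.h m 0, MayGen.h (m - l) l, MayGen.h 1 n}) := by
  obtain ⟨k, rfl⟩ := Nat.exists_eq_add_of_le' hp
  have hlast := MayGen.hasLastCarry_iff_of_lt (k := k) (S := S) (by omega : l < m) hmn
  have hmiddle := MayGen.hasLastCarry_iff_of_lt_of_lt (k := k) (S := S) hlm (by omega : m < n)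
  have hfirst :=
    MayGen.not_hasLastCarry_of_lt (k := k) (S := S) (by omega : l < m) (by omega : m < n)
  refine (MayGen.admissible_and_totals_iff_hasLastCarry hl hlm hmn).trans ?_
  rw [or_iff_right hfirst, hmiddle, hlast, or_comm]
  simp only [or_assoc]
  rfl

/-- for `n ≥ m+2 > 5`, the admissible monomials of total filtration `p+1`
and total degree `q(pⁿ + pᵐ + p² - 1) + p - 3` are exactly the seven multisets
`g₁, …, g₇` of Lemma 3.1. -/
theorem stmt8 (p : ℕ) (hp : p.Prime) (hp5 : 5 ≤ p) (m n : ℕ)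
    (hmn : m + 2 ≤ n) (hm : 5 < m + 2) (S : Multiset MayGen) :
    ((∀ x ∈ S, x.IsValid) ∧ Admissible S ∧ totalFilt S = p + 1 ∧
        totalDeg p S = 2 * (p - 1) * (p ^ n + p ^ m + p ^ 2 - 1) + (p - 3)) ↔
      (S = Multiset.replicate (p - 3) (MayGen.a n) +
            {MayGen.h 3 0, MayGen.h 1 m, MayGen.h (n - 2) 2, MayGen.h n 0} ∨
       S = Multiset.replicate (p - 3) (MayGen.a n) +
            {MayGen.h 1 2, MayGen.h (m + 1) 0, MayGen.h (n - m) m, MayGen.h n 0} ∨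
       S = {MayGen.a (m + 1)} + Multiset.replicate (p - 4) (MayGen.a n) +
            {MayGen.h 3 0, MayGen.h (n - m) m, MayGen.h (n - 2) 2, MayGen.h n 0} ∨
       S = Multiset.replicate (p - 3) (MayGen.a n) +
            {MayGen.h 3 0, MayGen.h (m - 1) 2, MayGen.h (n - m) m, MayGen.h n 0} ∨
       S = Multiset.replicate (p - 3) (MayGen.a n) +
            {MayGen.h 3 0, MayGen.h (m + 1) 0, MayGen.h (n - m) m, MayGen.h (n - 2) 2} ∨
       S = {MayGen.a 3} + Multiset.replicate (p - 4) (MayGen.a n) +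
            {MayGen.h (m + 1) 0, MayGen.h (n - m) m, MayGen.h (n - 2) 2, MayGen.h n 0} ∨
       S = Multiset.replicate (p - 3) (MayGen.a m) +
            {MayGen.h 3 0, MayGen.h m 0, MayGen.h (m - 2) 2, MayGen.h 1 n}) :=
  stmt8_general p (by omega) 2 m n (by omega) (by omega) hmn S
end

section
/- Let p ≥ 5 be a prime, q = 2(p−1), and let m, n be integers with n ≥ m+2 > 5. Then the admissible monomials of total filtration 3 and total degree q(2p^{n−1} + ⋯ + 2p^{m+1} + 3p^m + ⋯ + 3p² + 2p + 2) + 1 are exactly the three multisets {a_{m+1}, h_{n−2,2}, h_{n,0}}, {a_n, h_{m−1,2}, h_{n,0}}, and {a_n, h_{m+1,0}, h_{n−2,2}}. (This is the combinatorial content of the computation E₁^{3, t, *} = Z_p{a_{m+1} h_{n−2,2} h_{n,0}, a_n h_{m−1,2} h_{n,0}, a_n h_{m+1,0} h_{n−2,2}} used in the proof of Lemma 3.1.) -/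
/-!
All degrees are differences of powers of `p`, up to the summand `-1` of `a_k`:
`deg a_k = 2p^k - 1`, `deg h_{i,j} = 2p^(i+j) - 2p^j` and `deg b_{i,j} = deg h_{i,j+1}`, while the
prescribed degree is `4p^n + 2p^(m+1) - 2p^2 - 3`. Hence a monomial of filtration `3` and this
degree gives an equation between two sums of at most five powers of `p`. As `p ≥ 5`, no power
occurs `p` times on the left, and uniqueness of base-`p` digits matches the exponents on both
sides. For `a_k h_{i,j} h_{i',j'}` this says `{k, i+j, i'+j', 2, 0} = {j, j', m+1, n, n}`, so that
`{j, j'} = {2, 0}`, and the three monomials are the three ways of distributing `{m+1, n, n}` over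
`k`, `i+j`, `i'+j'`. The other types of monomials admit no matching.
-/

/-- The value `∑ p ^ e` over a multiset `s` of exponents `e`, i.e. the number whose base-`p` digits,
before carrying, are the multiplicities of `s`. -/
def powSum (p : ℕ) (s : Multiset ℕ) : ℕ := (s.map (p ^ ·)).sum

section PowSum

variable {p : ℕ}

@[simp] theorem powSum_cons (e : ℕ) (s : Multiset ℕ) :
    powSum p (e ::ₘ s) = p ^ e + powSum p s := by
  simp [powSum]

@[simp] theorem powSum_singleton (e : ℕ) : powSum p {e} = p ^ e := by
  simp [powSum]

@[simp] theorem powSum_add (s t : Multiset ℕ) : powSum p (s + t) = powSum p s + powSum p t := by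
  simp [powSum]

theorem powSum_replicate (c e : ℕ) : powSum p (Multiset.replicate c e) = c * p ^ e := by
  simp [powSum]

theorem pow_dvd_powSum {e : ℕ} {s : Multiset ℕ} (hs : ∀ x ∈ s, e ≤ x) : p ^ e ∣ powSum p s :=
  Multiset.dvd_sum (by simpa using fun x hx => pow_dvd_pow p (hs x hx))

theorem powSum_modEq_count_mul {e : ℕ} {s : Multiset ℕ} (hs : ∀ x ∈ s, e ≤ x) :
    powSum p s ≡ s.count e * p ^ e [MOD p ^ (e + 1)] := by
  have hdvd : p ^ (e + 1) ∣ powSum p (s.filter (e ≠ ·)) :=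
    pow_dvd_powSum fun x hx => by
      obtain ⟨hxs, hne⟩ := Multiset.mem_filter.1 hx
      exact lt_of_le_of_ne (hs x hxs) hne
  rw [← Multiset.filter_add_not (e = ·) s, powSum_add, Multiset.filter_eq, powSum_replicate]
  simpa using hdvd.modEq_zero_nat.add_left (s.count e * p ^ e)

theorem count_modEq_count_of_powSum_eq (hp : 0 < p) {e : ℕ} {s t : Multiset ℕ}
    (hs : ∀ x ∈ s, e ≤ x) (ht : ∀ x ∈ t, e ≤ x) (h : powSum p s = powSum p t) :
    s.count e ≡ t.count e [MOD p] := by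
  have hmul := (powSum_modEq_count_mul hs).symm.trans (h ▸ powSum_modEq_count_mul ht)
  rw [pow_succ'] at hmul
  exact Nat.ModEq.mul_right_cancel' (pow_pos hp e).ne' hmul

theorem exists_powSum_eq_card_lt (hp : 1 < p) {e : ℕ} {t : Multiset ℕ} (he : p ≤ t.count e) :
    ∃ t', powSum p t' = powSum p t ∧ t'.card < t.card := by
  obtain ⟨r, rfl⟩ := Multiset.le_iff_exists_add.1 (Multiset.le_count_iff_replicate_le.1 he)
  refine ⟨(e + 1) ::ₘ r, ?_, ?_⟩
  · rw [powSum_cons, powSum_add, powSum_replicate, pow_succ']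
  · rw [Multiset.card_cons, Multiset.card_add, Multiset.card_replicate]
    omega

/- Compare the multiplicities of the least exponent `e`, which agree modulo `p`. If `e` occurs only
in `t`, it does so at least `p` times, and carrying `p * p ^ e = p ^ (e + 1)` shortens `t`. -/
theorem eq_of_powSum_eq_of_card_le (hp : 1 < p) {s t : Multiset ℕ} (hs : ∀ e, s.count e < p)
    (hcard : t.card ≤ s.card) (h : powSum p s = powSum p t) : s = t := by
  induction ht : t.card using Nat.strong_induction_on generalizing s t with
  | _ c ih =>
  subst ht
  rcases eq_or_ne (s + t) 0 with h0 | h0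
  · obtain ⟨rfl, rfl⟩ := add_eq_zero.1 h0
    rfl
  obtain ⟨e, he, hmin⟩ := Multiset.exists_min_image id h0
  have hmod : s.count e ≡ t.count e [MOD p] := count_modEq_count_of_powSum_eq (by omega)
    (fun x hx => hmin x (Multiset.mem_add.2 (.inl hx)))
    (fun x hx => hmin x (Multiset.mem_add.2 (.inr hx))) h
  have het : e ∈ t := by
    by_contra het
    rw [Multiset.count_eq_zero.2 het] at hmod
    have hes := (Multiset.mem_add.1 he).resolve_right het
    exact (Multiset.count_pos.2 hes).ne' (hmod.eq_of_lt_of_lt (hs e) (by omega))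
  by_cases hes : e ∈ s
  · obtain ⟨s, rfl⟩ := Multiset.exists_cons_of_mem hes
    obtain ⟨t, rfl⟩ := Multiset.exists_cons_of_mem het
    simp only [powSum_cons, Nat.add_left_cancel_iff, Multiset.card_cons,
      Nat.add_le_add_iff_right] at h hcard
    have hs' : ∀ x, s.count x < p := fun x => (Multiset.count_le_count_cons x e s).trans_lt (hs x)
    rw [ih _ (by simp) hs' hcard h rfl]
  · rw [Multiset.count_eq_zero.2 hes] at hmod
    have hpt : p ≤ t.count e :=
      Nat.le_of_dvd (Multiset.count_pos.2 het) ((Nat.modEq_zero_iff_dvd).1 hmod.symm)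
    obtain ⟨t', hsum, hlt⟩ := exists_powSum_eq_card_lt hp hpt
    obtain rfl := ih _ hlt hs (by omega) (h.trans hsum.symm) rfl
    omega

end PowSum

theorem pred_mul_sum_pow_Icc_add {p a b : ℕ} (hp : 1 ≤ p) (hab : a ≤ b + 1) :
    (p - 1) * ∑ j ∈ Finset.Icc a b, p ^ j + p ^ a = p ^ (b + 1) := by
  rw [← Finset.Ico_add_one_right_eq_Icc]
  zify [hp]
  linear_combination geom_sum_Ico_mul (p : ℤ) hab

theorem multiset_pair_eq_pair_iff {α : Type*} {a b c d : α} :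
    ({a, b} : Multiset α) = {c, d} ↔ a = c ∧ b = d ∨ a = d ∧ b = c := by
  classical
  simp only [Multiset.insert_eq_cons, Multiset.cons_eq_cons, Multiset.singleton_eq_cons_iff,
    Multiset.singleton_inj]
  grind

theorem multiset_triple_eq_triple_iff {α : Type*} {a b c x y : α} :
    ({a, b, c} : Multiset α) = {x, y, y} ↔
      a = x ∧ b = y ∧ c = y ∨ a = y ∧ b = x ∧ c = y ∨ a = y ∧ b = y ∧ c = x := by
  have swap : ({x, y, y} : Multiset α) = {y, x, y} := Multiset.cons_swap x y {y}
  have cancel (e u v w z : α) : ({e, u, v} : Multiset α) = {e, w, z} ↔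
      u = w ∧ v = z ∨ u = z ∧ v = w :=
    (Multiset.cons_inj_right e).trans multiset_pair_eq_pair_iff
  constructor
  · intro h
    have ha : a ∈ ({x, y, y} : Multiset α) := h ▸ Multiset.mem_cons_self a _
    obtain rfl | rfl : a = x ∨ a = y := by simpa using ha
    · have := (cancel ..).1 h
      tauto
    · have := (cancel ..).1 (h.trans swap)
      tauto
  · rintro (⟨rfl, rfl, rfl⟩ | ⟨rfl, rfl, rfl⟩ | ⟨rfl, rfl, rfl⟩)
    · rfl
    · exact swap.symm
    · exact (swap.trans ((cancel ..).2 (by tauto))).symm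

namespace MayGen

theorem deg_a_add {p k : ℕ} (hp : 1 ≤ p) : (a k).deg p + 1 = 2 * p ^ k := by
  have : 0 < p ^ k := pow_pos hp k
  simp only [deg]
  omega

theorem deg_h_add {p i j : ℕ} (hp : 1 ≤ p) : (h i j).deg p + 2 * p ^ j = 2 * p ^ (i + j) := by
  have hi : 1 ≤ p ^ i := Nat.one_le_pow i p hp
  simp only [deg]
  zify [hi]
  ring

theorem deg_b_eq_deg_h (p i j : ℕ) : (b i j).deg p = (h i (j + 1)).deg p := rfl

/-- The monomial `∏ a_k · ∏ h_{i,j} · ∏ b_{i,j}` with `k` ranging over `A` and the pairs `(i, j)`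
over `H` and `B`. -/
def monomial (A : Multiset ℕ) (H B : Multiset (ℕ × ℕ)) : Multiset MayGen :=
  A.map a + H.map (fun x => h x.1 x.2) + B.map (fun x => b x.1 x.2)

/-- The exponents of the positive terms in `deg a_k = 2p^k - 1`, `deg h_{i,j} = 2p^(i+j) - 2p^j`
and `deg b_{i,j} = 2p^(i+j+1) - 2p^(j+1)`. -/
def topExponents (A : Multiset ℕ) (H B : Multiset (ℕ × ℕ)) : Multiset ℕ :=
  A + H.map (fun x => x.1 + x.2) + B.map (fun x => x.1 + (x.2 + 1))

/-- The exponents of the negative terms `-2p^j` in `deg h_{i,j}` and `-2p^(j+1)` in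
`deg b_{i,j}`. -/
def bottomExponents (H B : Multiset (ℕ × ℕ)) : Multiset ℕ :=
  H.map (fun x => x.2) + B.map (fun x => x.2 + 1)

theorem exists_eq_monomial (S : Multiset MayGen) : ∃ A H B, S = monomial A H B := by
  induction S using Multiset.induction_on with
  | empty => exact ⟨0, 0, 0, rfl⟩
  | cons x S ih =>
    obtain ⟨A, H, B, rfl⟩ := ih
    rcases x with k | ⟨i, j⟩ | ⟨i, j⟩
    · exact ⟨k ::ₘ A, H, B, by simp [monomial]⟩
    · exact ⟨A, (i, j) ::ₘ H, B, by simp [monomial]⟩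
    · exact ⟨A, H, (i, j) ::ₘ B, by simp [monomial]⟩

theorem totalFilt_monomial (A : Multiset ℕ) (H B : Multiset (ℕ × ℕ)) :
    totalFilt (monomial A H B) = A.card + H.card + 2 * B.card := by
  simp [totalFilt, monomial, filt, Function.comp_def, mul_comm]

theorem totalDeg_monomial_add {p : ℕ} (hp : 1 ≤ p) (A : Multiset ℕ) (H B : Multiset (ℕ × ℕ)) :
    totalDeg p (monomial A H B) + A.card + 2 * powSum p (bottomExponents H B) =
      2 * powSum p (topExponents A H B) := by
  have hA : ((A.map a).map (deg p)).sum + A.card = 2 * powSum p A := by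
    have hcard : A.card = (A.map fun _ => 1).sum := by simp
    simp only [hcard, powSum, Multiset.map_map, Function.comp_def, ← Multiset.sum_map_mul_left,
      ← Multiset.sum_map_add, deg_a_add hp]
  have hH : ((H.map fun x => h x.1 x.2).map (deg p)).sum + 2 * powSum p (H.map fun x => x.2) =
      2 * powSum p (H.map fun x => x.1 + x.2) := by
    simp only [powSum, Multiset.map_map, Function.comp_def, ← Multiset.sum_map_mul_left,
      ← Multiset.sum_map_add, deg_h_add hp]
  have hB : ((B.map fun x => b x.1 x.2).map (deg p)).sum + 2 * powSum p (B.map fun x => x.2 + 1) =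
      2 * powSum p (B.map fun x => x.1 + (x.2 + 1)) := by
    simp only [powSum, Multiset.map_map, Function.comp_def, ← Multiset.sum_map_mul_left,
      ← Multiset.sum_map_add, deg_b_eq_deg_h, deg_h_add hp]
  simp only [totalDeg, monomial, topExponents, bottomExponents, Multiset.map_add,
    Multiset.sum_add, powSum_add]
  omega

theorem card_topExponents (A : Multiset ℕ) (H B : Multiset (ℕ × ℕ)) :
    (topExponents A H B).card = A.card + H.card + B.card := by
  simp [topExponents]

theorem card_bottomExponents (H B : Multiset (ℕ × ℕ)) :
    (bottomExponents H B).card = H.card + B.card := by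
  simp [bottomExponents]

/-- The prescribed degree `q(2p^(n-1) + ⋯ + 2p^(m+1) + 3p^m + ⋯ + 3p^2 + 2p + 2) + 1`, where
`q = 2(p-1)`. -/
def targetDegree (p m n : ℕ) : ℕ :=
  2 * (p - 1) * (2 * ∑ j ∈ Finset.Icc (m + 1) (n - 1), p ^ j +
    3 * ∑ j ∈ Finset.Icc 2 m, p ^ j + 2 * p + 2) + 1

section Classification

variable {p m n : ℕ}

theorem targetDegree_add (hp : 1 ≤ p) (hm : 1 ≤ m) (hmn : m < n) :
    targetDegree p m n + (2 * p ^ 2 + 3) = 4 * p ^ n + 2 * p ^ (m + 1) := by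
  have hlow := pred_mul_sum_pow_Icc_add (a := 2) (b := m) hp (by omega)
  have hhigh := pred_mul_sum_pow_Icc_add (a := m + 1) (b := n - 1) hp (by omega)
  rw [Nat.sub_add_cancel (by omega)] at hhigh
  unfold targetDegree
  zify [hp] at hlow hhigh ⊢
  linear_combination 6 * hlow + 4 * hhigh

/- Only the generators `a_k` have odd degree, so there are one or three of them. Three would leave
four top exponents, counting the extra `2`, against the three of `{m + 1, n, n}`. -/
theorem card_eq_one_of_totalDeg_eq (hp : 5 ≤ p) (hm : 1 ≤ m) (hmn : m < n) {A : Multiset ℕ}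
    {H B : Multiset (ℕ × ℕ)} (hfilt : totalFilt (monomial A H B) = 3)
    (hdeg : totalDeg p (monomial A H B) = targetDegree p m n) :
    A.card = 1 := by
  rw [totalFilt_monomial] at hfilt
  have htarget := targetDegree_add (p := p) (by omega) hm hmn
  have hpow := totalDeg_monomial_add (p := p) (by omega) A H B
  obtain hA | hA : A.card = 1 ∨ A.card = 3 := by omega
  · exact hA
  have htop := card_topExponents A H B
  have hbot := card_bottomExponents H B
  have hcount (e : ℕ) : (2 ::ₘ topExponents A H B).count e < p :=
    (Multiset.count_le_card e _).trans_lt (by rw [Multiset.card_cons]; omega)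
  have hsum : powSum p (2 ::ₘ topExponents A H B) =
      powSum p (bottomExponents H B + {m + 1, n, n}) := by
    simp only [Multiset.insert_eq_cons, powSum_add, powSum_cons, powSum_singleton]
    omega
  have hcard : (bottomExponents H B + {m + 1, n, n}).card < (2 ::ₘ topExponents A H B).card := by
    simp only [Multiset.insert_eq_cons, Multiset.card_add, Multiset.card_cons,
      Multiset.card_singleton]
    omega
  have heq := eq_of_powSum_eq_of_card_le (by omega) hcount hcard.le hsum
  exact absurd (congrArg Multiset.card heq) hcard.ne'

theorem topExponents_add_eq (hp : 5 ≤ p) (hm : 1 ≤ m) (hmn : m < n) {A : Multiset ℕ}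
    {H B : Multiset (ℕ × ℕ)} (hfilt : totalFilt (monomial A H B) = 3)
    (hdeg : totalDeg p (monomial A H B) = targetDegree p m n) :
    {2, 0} + topExponents A H B = bottomExponents H B + {m + 1, n, n} := by
  have hA := card_eq_one_of_totalDeg_eq hp hm hmn hfilt hdeg
  rw [totalFilt_monomial] at hfilt
  have htarget := targetDegree_add (p := p) (by omega) hm hmn
  have hpow := totalDeg_monomial_add (p := p) (by omega) A H B
  have htop := card_topExponents A H B
  have hbot := card_bottomExponents H B
  refine eq_of_powSum_eq_of_card_le (p := p) (by omega) (fun e => ?_) ?_ ?_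
  · have hpair : ({2, 0} : Multiset ℕ).count e ≤ 1 :=
      Multiset.nodup_iff_count_le_one.1 (by simp) e
    have hrest := (topExponents A H B).count_le_card e
    rw [Multiset.count_add]
    omega
  · simp only [Multiset.insert_eq_cons, Multiset.card_add, Multiset.card_cons,
      Multiset.card_singleton]
    omega
  · simp only [Multiset.insert_eq_cons, powSum_add, powSum_cons, powSum_singleton, pow_zero]
    omega

theorem mem_bottomExponents_of_topExponents_add_eq {A : Multiset ℕ} {H B : Multiset (ℕ × ℕ)}
    (heq : {2, 0} + topExponents A H B = bottomExponents H B + {m + 1, n, n}) {e : ℕ}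
    (he : e ∈ ({2, 0} : Multiset ℕ)) (hm : e ≠ m + 1) (hn : e ≠ n) :
    e ∈ bottomExponents H B := by
  have hmem : e ∈ bottomExponents H B + {m + 1, n, n} := heq ▸ Multiset.mem_add.2 (.inl he)
  exact (Multiset.mem_add.1 hmem).resolve_right (by simp [hm, hn])

theorem exists_eq_pair_of_topExponents_add_eq (hm : 2 ≤ m) (hmn : m < n) {k : ℕ}
    {H : Multiset (ℕ × ℕ)} (hH : H.card = 2)
    (heq : {2, 0} + topExponents {k} H 0 = bottomExponents H 0 + {m + 1, n, n}) :
    ∃ i j, H = {(i, 2), (j, 0)} ∧ ({k, i + 2, j} : Multiset ℕ) = {m + 1, n, n} := by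
  have hbot : {2, 0} = bottomExponents H 0 := by
    refine Multiset.eq_of_le_of_card_le ((Multiset.le_iff_subset (by simp)).2 ?_)
      (by simp [card_bottomExponents, hH])
    intro e he
    obtain rfl | rfl : e = 2 ∨ e = 0 := by simpa using he
    all_goals exact mem_bottomExponents_of_topExponents_add_eq heq he (by omega) (by omega)
  rw [← hbot, add_right_inj] at heq
  obtain ⟨⟨i, _⟩, ⟨j, _⟩, rfl⟩ := Multiset.card_eq_two.1 hH
  obtain ⟨rfl, rfl⟩ | ⟨rfl, rfl⟩ := multiset_pair_eq_pair_iff.1 hbot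
  · exact ⟨i, j, rfl, heq⟩
  · rw [Multiset.pair_comm] at heq ⊢
    exact ⟨j, i, rfl, heq⟩

theorem exists_eq_of_totalDeg_eq (hp : 5 ≤ p) (hm : 2 ≤ m) (hmn : m < n) {S : Multiset MayGen}
    (hfilt : totalFilt S = 3) (hdeg : totalDeg p S = targetDegree p m n) :
    ∃ k i j, S = {a k, h i 2, h j 0} ∧ ({k, i + 2, j} : Multiset ℕ) = {m + 1, n, n} := by
  obtain ⟨A, H, B, rfl⟩ := exists_eq_monomial S
  have heq := topExponents_add_eq hp (by omega) hmn hfilt hdeg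
  obtain ⟨k, rfl⟩ :=
    Multiset.card_eq_one.1 (card_eq_one_of_totalDeg_eq hp (by omega) hmn hfilt hdeg)
  rw [totalFilt_monomial, Multiset.card_singleton] at hfilt
  have hH : H ≠ 0 := by
    rintro rfl
    have h0 := mem_bottomExponents_of_topExponents_add_eq heq (e := 0) (by simp) (by omega)
      (by omega)
    simp [bottomExponents] at h0
  have hHcard := Multiset.card_pos.2 hH
  obtain rfl : B = 0 := Multiset.card_eq_zero.1 (by omega)
  obtain ⟨i, j, rfl, hexp⟩ := exists_eq_pair_of_topExponents_add_eq hm hmn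
    (by simpa [add_comm] using hfilt) heq
  exact ⟨k, i, j, rfl, hexp⟩

theorem totalDeg_a_h_two_h_zero_add (hp : 1 ≤ p) (k i j : ℕ) :
    totalDeg p {a k, h i 2, h j 0} + (2 * p ^ 2 + 3) = 2 * powSum p {k, i + 2, j} := by
  have hdeg : totalDeg p {a k, h i 2, h j 0} + 1 + 2 * powSum p {2, 0} =
      2 * powSum p {k, i + 2, j} :=
    totalDeg_monomial_add hp {k} {(i, 2), (j, 0)} 0
  simp only [Multiset.insert_eq_cons, powSum_cons, powSum_singleton, pow_zero] at hdeg ⊢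
  omega

theorem totalFilt_eq_and_totalDeg_eq_iff (hp : 5 ≤ p) (hm : 2 ≤ m) (hmn : m < n)
    {S : Multiset MayGen} :
    totalFilt S = 3 ∧ totalDeg p S = targetDegree p m n ↔
      ∃ k i j, S = {a k, h i 2, h j 0} ∧ ({k, i + 2, j} : Multiset ℕ) = {m + 1, n, n} := by
  constructor
  · rintro ⟨hfilt, hdeg⟩
    exact exists_eq_of_totalDeg_eq hp hm hmn hfilt hdeg
  · rintro ⟨k, i, j, rfl, hexp⟩
    refine ⟨rfl, ?_⟩
    have htarget := targetDegree_add (p := p) (by omega) (by omega) hmn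
    have hpow := totalDeg_a_h_two_h_zero_add (p := p) (by omega) k i j
    rw [hexp] at hpow
    simp only [Multiset.insert_eq_cons, powSum_cons, powSum_singleton] at hpow ⊢
    omega

theorem exists_exponents_eq_iff (hm : 1 ≤ m) (hn : 2 ≤ n) {S : Multiset MayGen} :
    (∃ k i j, S = {a k, h i 2, h j 0} ∧ ({k, i + 2, j} : Multiset ℕ) = {m + 1, n, n}) ↔
      S = {a (m + 1), h (n - 2) 2, h n 0} ∨
      S = {a n, h (m - 1) 2, h n 0} ∨
      S = {a n, h (m + 1) 0, h (n - 2) 2} := by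
  simp only [multiset_triple_eq_triple_iff]
  constructor
  · rintro ⟨k, i, j, rfl, ⟨rfl, rfl, rfl⟩ | ⟨rfl, hi, rfl⟩ | ⟨rfl, rfl, rfl⟩⟩
    · exact .inl rfl
    · obtain rfl : i = m - 1 := by omega
      exact .inr (.inl rfl)
    · exact .inr (.inr (congrArg _ (Multiset.pair_comm _ _)))
  · rintro (rfl | rfl | rfl)
    · exact ⟨m + 1, n - 2, n, rfl, by omega⟩
    · exact ⟨n, m - 1, n, rfl, by omega⟩
    · exact ⟨n, n - 2, m + 1, congrArg _ (Multiset.pair_comm _ _), by omega⟩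

end Classification

theorem isValid_a_h_h {i i' : ℕ} (hi : 1 ≤ i) (hi' : 1 ≤ i') (k j j' : ℕ) :
    ∀ x ∈ ({a k, h i j, h i' j'} : Multiset MayGen), x.IsValid := by
  simp [IsValid, hi, hi']

theorem admissible_of_nodup {S : Multiset MayGen} (hS : S.Nodup) : Admissible S :=
  fun i j => Multiset.nodup_iff_count_le_one.1 hS (h i j)

end MayGen

theorem stmt11_general {p m n : ℕ} (hp : 5 ≤ p) (hm : 2 ≤ m) (hmn : m < n) (S : Multiset MayGen) :
    (totalFilt S = 3 ∧
        totalDeg p S =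
          2 * (p - 1) * (2 * ∑ j ∈ Finset.Icc (m + 1) (n - 1), p ^ j +
            3 * ∑ j ∈ Finset.Icc 2 m, p ^ j + 2 * p + 2) + 1) ↔
      (S = {MayGen.a (m + 1), MayGen.h (n - 2) 2, MayGen.h n 0} ∨
       S = {MayGen.a n, MayGen.h (m - 1) 2, MayGen.h n 0} ∨
       S = {MayGen.a n, MayGen.h (m + 1) 0, MayGen.h (n - 2) 2}) :=
  (MayGen.totalFilt_eq_and_totalDeg_eq_iff hp hm hmn).trans
    (MayGen.exists_exponents_eq_iff (by omega) (by omega))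

/-- for `n ≥ m+2 > 5`, the admissible monomials of total filtration `3`
and total degree `q(2p^{n-1} + ⋯ + 2p^{m+1} + 3p^m + ⋯ + 3p² + 2p + 2) + 1` are exactly
`{a (m+1), h (n-2) 2, h n 0}`, `{a n, h (m-1) 2, h n 0}` and `{a n, h (m+1) 0, h (n-2) 2}`. -/
theorem stmt11 (p : ℕ) (hp : p.Prime) (hp5 : 5 ≤ p) (m n : ℕ)
    (hmn : m + 2 ≤ n) (hm : 5 < m + 2) (S : Multiset MayGen) :
    ((∀ x ∈ S, x.IsValid) ∧ Admissible S ∧ totalFilt S = 3 ∧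
        totalDeg p S =
          2 * (p - 1) * (2 * ∑ j ∈ Finset.Icc (m + 1) (n - 1), p ^ j +
            3 * ∑ j ∈ Finset.Icc 2 m, p ^ j + 2 * p + 2) + 1) ↔
      (S = {MayGen.a (m + 1), MayGen.h (n - 2) 2, MayGen.h n 0} ∨
       S = {MayGen.a n, MayGen.h (m - 1) 2, MayGen.h n 0} ∨
       S = {MayGen.a n, MayGen.h (m + 1) 0, MayGen.h (n - 2) 2}) := by
  have hiff := stmt11_general hp5 (by omega) (by omega : m < n) S
  refine ⟨fun ⟨_, _, hS⟩ => hiff.1 hS, fun hS => ⟨?_, ?_, hiff.2 hS⟩⟩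
  · rcases hS with rfl | rfl | rfl <;> exact MayGen.isValid_a_h_h (by omega) (by omega) _ _ _
  · rcases hS with rfl | rfl | rfl <;> exact MayGen.admissible_of_nodup (by simp)
end
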